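/- arXiv:1706.01645 — 4 statements merged into one kernel-verified Lean document; each statement's English description precedes it below -/
import Mathlib

section
/- Let p and q be distinct primes and let (G, H, T) be a faithful RCC loop folder of order pq with ⟨T⟩ = G (i.e., the envelope of an RCC loop of order pq). Then H is not a maximal subgroup of G; that is, there exists a subgroup K of G with H < K < G (equivalently, G acts imprimitively on the set of right cosets of H in G). -/
/-- A loop folder `(G, H, T)`: `T` contains `1` and is a transversal for the right cosets
of every conjugate `H^g = g⁻¹Hg` of `H` in `G` (note `H^g x = H^g t ↔ g*(x*t⁻¹)*g⁻¹ ∈ H`). -/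
def IsLoopFolder {G : Type*} [Group G] (H : Subgroup G) (T : Set G) : Prop :=
  (1 : G) ∈ T ∧ ∀ g x : G, ∃! t, t ∈ T ∧ g * (x * t⁻¹) * g⁻¹ ∈ H

/-- The loop folder is right conjugacy closed: `T` is invariant under conjugation by `G`. -/
def IsRCC {G : Type*} [Group G] (T : Set G) : Prop :=
  ∀ t ∈ T, ∀ g : G, g⁻¹ * t * g ∈ T

/-- The loop folder is faithful: the core `⋂_{g ∈ G} g⁻¹Hg` of `H` in `G` is trivial. -/
def IsFaithfulFolder {G : Type*} [Group G] (H : Subgroup G) : Prop :=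
  ∀ x : G, (∀ g : G, g * x * g⁻¹ ∈ H) → x = 1

open MulAction Pointwise
set_option linter.unusedSectionVars false

structure PQCtx (G Ω : Type*) [Group G] [MulAction G Ω] (T : Set G) (p q : ℕ) : Prop where
  hp : p.Prime
  hq : q.Prime
  hlt : q < p
  one : (1 : G) ∈ T
  conj : ∀ t ∈ T, ∀ g : G, g * t * g⁻¹ ∈ T
  ex : ∀ a b : Ω, ∃ t ∈ T, t • a = b
  uniq : ∀ s ∈ T, ∀ t ∈ T, ∀ a : Ω, s • a = t • a → s = t
  card : Nat.card Ω = p * q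
  cardT : T.ncard = p * q
  gen : Subgroup.closure T = ⊤

/-- elements of `T` centralizing `P` -/
def cenT {G : Type*} [Group G] (T : Set G) (P : Subgroup G) : Set G :=
  {t | t ∈ T ∧ ∀ u ∈ P, u * t = t * u}

theorem conj_modEq {G : Type*} [Group G] [Finite G] {p : ℕ} [Fact p.Prime] (P : Subgroup G)
    (hP : IsPGroup p P) (A : Set G) (hA : ∀ u ∈ P, ∀ a ∈ A, u * a * u⁻¹ ∈ A) :
    A.ncard ≡ (cenT A P).ncard [MOD p] := by
  let _ : MulAction P A :=
    { smul := fun u a => ⟨u.1 * a.1 * u.1⁻¹, hA u.1 u.2 a.1 a.2⟩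
      one_smul := fun a => Subtype.ext (by change (1:G) * a.1 * (1:G)⁻¹ = a.1; simp)
      mul_smul := fun u v a => Subtype.ext (by
        change (u.1 * v.1) * a.1 * (u.1 * v.1)⁻¹ = u.1 * (v.1 * a.1 * v.1⁻¹) * u.1⁻¹
        group) }
  have h := hP.card_modEq_card_fixedPoints A
  rw [Nat.card_coe_set_eq] at h
  have e : cenT A P = Subtype.val '' (fixedPoints P A) := by
    ext t
    constructor
    · rintro ⟨h1, h2⟩
      refine ⟨⟨t, h1⟩, ?_, rfl⟩
      intro u
      apply Subtype.ext
      change u.1 * t * u.1⁻¹ = t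
      rw [h2 u.1 u.2]; group
    · rintro ⟨a, ha, rfl⟩
      refine ⟨a.2, fun u hu => ?_⟩
      have := congrArg Subtype.val (ha ⟨u, hu⟩)
      change u * a.1 * u⁻¹ = a.1 at this
      exact mul_inv_eq_iff_eq_mul.mp this
  rw [e, Set.ncard_image_of_injective _ Subtype.val_injective, ← Nat.card_coe_set_eq]
  exact h

namespace PQCtx
variable {G Ω : Type*} [Group G] [MulAction G Ω] {T : Set G} {p q : ℕ}

theorem comm_of (c : PQCtx G Ω T p q) {x t : G} {a : Ω} (ht : t ∈ T) (h1 : x • a = a)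
    (h2 : x • t • a = t • a) : x * t = t * x := by
  have h := c.uniq _ (c.conj t ht x) t ht a (by
    have : x⁻¹ • a = a := by rw [inv_smul_eq_iff, h1]
    rw [mul_smul, mul_smul, this, h2])
  exact mul_inv_eq_iff_eq_mul.mp h

variable [Finite G] [Finite Ω] [FaithfulSMul G Ω] [IsPreprimitive G Ω]


theorem eq_one_of_comm (c : PQCtx G Ω T p q) {y : G} {a : Ω} (ha : y • a = a)
    (h : ∀ t ∈ T, y * t = t * y) : y = 1 := by
  apply FaithfulSMul.eq_of_smul_eq_smul (α := Ω)
  intro b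
  obtain ⟨t, ht, rfl⟩ := c.ex a b
  rw [← mul_smul, h t ht, mul_smul, ha, one_smul]

theorem two_fix (c : PQCtx G Ω T p q) {y : G} (hy : y ≠ 1) :
    2 * (fixedBy Ω y).ncard < p * q := by
  set F := fixedBy Ω y with hF
  have hpos : 0 < p * q := Nat.mul_pos c.hp.pos c.hq.pos
  rcases F.eq_empty_or_nonempty with h0 | ⟨a, ha⟩
  · rw [h0]; simpa using ⟨c.hp.pos, c.hq.pos⟩
  have key : ∀ t ∈ T, t • F = F ∨ Disjoint (t • F) F := by
    intro t ht
    by_cases hd : Disjoint (t • F) F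
    · exact Or.inr hd
    left
    obtain ⟨b, hb1, hb2⟩ := Set.not_disjoint_iff.mp hd
    obtain ⟨d, hd, rfl⟩ := hb1
    have hc := c.comm_of ht (mem_fixedBy.mp hd) (mem_fixedBy.mp hb2)
    have : t • F ⊆ F := by
      rintro _ ⟨z, hz, rfl⟩
      change y • t • z = t • z
      rw [← mul_smul, hc, mul_smul, mem_fixedBy.mp hz]
    refine Set.eq_of_subset_of_ncard_le this ?_ (Set.toFinite _)
    rw [Set.ncard_smul_set]
  have hex : ∃ t ∈ T, Disjoint (t • F) F := by
    by_contra hne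
    push Not at hne
    apply hy
    apply c.eq_one_of_comm (mem_fixedBy.mp ha)
    intro t ht
    have h1 : t • F = F := (key t ht).resolve_right (hne t ht)
    apply c.comm_of ht (mem_fixedBy.mp ha)
    have : t • a ∈ F := by rw [← h1]; exact Set.smul_mem_smul_set ha
    exact this
  obtain ⟨t, ht, hdis⟩ := hex
  have hle : ∀ g : G, Disjoint (g • F) F → 2 * F.ncard ≤ p * q := by
    intro g hg
    have := Set.ncard_union_eq hg
    rw [Set.ncard_smul_set] at this
    have h2 := Set.ncard_le_card (g • F ∪ F)
    rw [c.card] at h2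
    omega
  rcases (hle t hdis).lt_or_eq with h | h
  · exact h
  exfalso
  have hcompl : ∀ t ∈ T, t • F = F ∨ t • F = Fᶜ := by
    intro t ht
    rcases key t ht with h' | h'
    · exact Or.inl h'
    right
    refine Set.eq_of_subset_of_ncard_le h'.subset_compl_right ?_ (Set.toFinite _)
    rw [Set.ncard_smul_set]
    have := Set.ncard_add_ncard_compl F
    rw [c.card] at this
    omega
  have hall : ∀ g : G, g • F = F ∨ g • F = Fᶜ := by
    intro g
    have hg : g ∈ Subgroup.closure T := by rw [c.gen]; trivial
    induction hg using Subgroup.closure_induction with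
    | mem x hx => exact hcompl x hx
    | one => left; simp
    | mul x y _ _ hx hy =>
      rcases hx with hx | hx <;> rcases hy with hy | hy <;>
        simp [mul_smul, hx, hy, Set.smul_set_compl]
    | inv x _ hx =>
      rcases hx with hx | hx
      · left; rw [inv_smul_eq_iff, hx]
      · right; rw [inv_smul_eq_iff, Set.smul_set_compl, hx, compl_compl]
  have hB : IsBlock G F := by
    rw [isBlock_iff_smul_eq_or_disjoint]
    intro g
    rcases hall g with h' | h'
    · exact Or.inl h'
    · right; rw [h']; exact disjoint_compl_left
  have hp2 : 3 ≤ p := by have := c.hq.two_le; have := c.hlt; omega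
  have hq2 := c.hq.two_le
  rcases hB.subsingleton_or_eq_univ with h' | h'
  · have := (Set.ncard_le_one_iff_subsingleton).mpr h'
    nlinarith
  · rw [h', Set.ncard_univ, c.card] at h
    omega

end PQCtx

namespace PQCtx
variable {G Ω : Type*} [Group G] [MulAction G Ω] {T : Set G} {p q : ℕ}
variable [Finite G] [Finite Ω] [FaithfulSMul G Ω] [IsPreprimitive G Ω]

theorem stab_index (c : PQCtx G Ω T p q) (a : Ω) : (stabilizer G a).index = p * q := by
  rw [index_stabilizer, orbit_eq_univ, Set.ncard_univ, c.card]

variable [Fact p.Prime]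

theorem orbit_card (c : PQCtx G Ω T p q) (P : Sylow p G) (a : Ω) :
    (orbit (P : Subgroup G) a).ncard = p := by
  obtain ⟨n, hn⟩ := P.2.card_orbit a
  rw [Nat.card_coe_set_eq] at hn
  have hle := Set.ncard_le_card (orbit (P : Subgroup G) a)
  rw [c.card] at hle
  change (orbit (P : Subgroup G) a).ncard = p ^ n at hn
  rw [hn] at hle ⊢
  have h1 : n < 2 := by
    by_contra h
    have h2 : p ^ 2 ≤ p ^ n := Nat.pow_le_pow_right c.hp.pos (by omega)
    have := c.hlt
    have := c.hp.pos
    nlinarith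
  interval_cases n
  · exfalso
    rw [pow_zero] at hn
    rw [Set.ncard_eq_one] at hn
    obtain ⟨b, hb⟩ := hn
    have hPs : (P : Subgroup G) ≤ stabilizer G a := by
      intro u hu
      have h1 : u • a ∈ orbit (P : Subgroup G) a := ⟨⟨u, hu⟩, rfl⟩
      have h2 : a ∈ orbit (P : Subgroup G) a := mem_orbit_self a
      rw [hb] at h1 h2
      rw [mem_stabilizer_iff, h1, h2]
    have := Subgroup.index_dvd_of_le hPs
    rw [c.stab_index] at this
    exact P.not_dvd_index ((Dvd.intro q rfl).trans this)
  · simp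

theorem exists_move (c : PQCtx G Ω T p q) (P : Sylow p G) (a : Ω) :
    ∃ u ∈ P, u • a ≠ a := by
  by_contra h
  push Not at h
  have : orbit (P : Subgroup G) a = {a} := by
    ext b
    constructor
    · rintro ⟨u, rfl⟩
      exact h u.1 u.2
    · rintro rfl; exact mem_orbit_self _
  have h2 := c.orbit_card P a
  rw [this, Set.ncard_singleton] at h2
  exact c.hp.one_lt.ne h2

theorem orb_zpow (c : PQCtx G Ω T p q) (P : Sylow p G) {x g : G} {b : Ω} (hx : x ∈ P)
    (hxb : x • b ≠ b) (hg : g ∈ P) : ∃ i : ℤ, g • b = x ^ i • b := by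
  have hz : Subgroup.zpowers x ≤ (P : Subgroup G) := by
    rw [Subgroup.zpowers_le]; exact hx
  have hZ : IsPGroup p (Subgroup.zpowers x) := P.2.to_le hz
  obtain ⟨n, hn⟩ := hZ.card_orbit b
  rw [Nat.card_coe_set_eq] at hn
  have hsub : orbit (Subgroup.zpowers x) b ⊆ orbit (P : Subgroup G) b := by
    rintro _ ⟨u, rfl⟩
    exact ⟨⟨u.1, hz u.2⟩, rfl⟩
  have hn0 : n ≠ 0 := by
    rintro rfl
    rw [pow_zero, Set.ncard_eq_one] at hn
    obtain ⟨d, hd⟩ := hn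
    have h1 : x • b ∈ orbit (Subgroup.zpowers x) b := ⟨⟨x, Subgroup.mem_zpowers x⟩, rfl⟩
    have h2 : b ∈ orbit (Subgroup.zpowers x) b := mem_orbit_self b
    rw [hd] at h1 h2
    exact hxb (h1.trans h2.symm)
  have heq : orbit (Subgroup.zpowers x) b = orbit (P : Subgroup G) b := by
    refine Set.eq_of_subset_of_ncard_le hsub ?_ (Set.toFinite _)
    rw [c.orbit_card, hn]
    exact Nat.le_self_pow hn0 p
  have : g • b ∈ orbit (P : Subgroup G) b := ⟨⟨g, hg⟩, rfl⟩
  rw [← heq] at this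
  obtain ⟨⟨_, i, rfl⟩, hi⟩ := this
  exact ⟨i, hi.symm⟩

theorem comm_P (c : PQCtx G Ω T p q) (P : Sylow p G) {u v : G} (hu : u ∈ P) (hv : v ∈ P) :
    u * v = v * u := by
  apply FaithfulSMul.eq_of_smul_eq_smul (α := Ω)
  intro a
  let K := stabilizer (P : Subgroup G) a
  have hidx : K.index = p := by rw [index_stabilizer, c.orbit_card]
  have hcard : (Nat.card (P : Subgroup G)).minFac = p := by
    rw [P.card_eq_multiplicity]
    apply Nat.Prime.pow_minFac c.hp
    intro h0
    have h1 := K.index_dvd_card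
    rw [hidx, P.card_eq_multiplicity, h0, pow_zero] at h1
    exact c.hp.one_lt.ne' (Nat.dvd_one.mp h1)
  have hN : K.Normal := Subgroup.normal_of_index_eq_minFac_card (by rw [hidx, hcard])
  have hcy : IsCyclic ((P : Subgroup G) ⧸ K) := isCyclic_of_prime_card (p := p) hidx
  have hcm : ∀ x y : (P : Subgroup G) ⧸ K, x * y = y * x :=
    fun x y => (IsCyclic.commGroup (α := (P : Subgroup G) ⧸ K)).mul_comm x y
  have h := hcm (QuotientGroup.mk ⟨u, hu⟩) (QuotientGroup.mk ⟨v, hv⟩)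
  rw [← QuotientGroup.mk_mul, ← QuotientGroup.mk_mul, QuotientGroup.eq] at h
  have h' : ((u * v)⁻¹ * (v * u)) • a = a := h
  rw [mul_smul, inv_smul_eq_iff] at h'
  exact h'.symm

theorem eq_of_commute (P P' : Sylow p G) (h : ∀ u ∈ P, ∀ v ∈ P', u * v = v * u) : P = P' := by
  have h1 := P.2.inf_normalizer_sylow P'
  have h2 : (P : Subgroup G) ≤ Subgroup.normalizer (P' : Set G) := by
    intro u hu
    apply Subgroup.centralizer_le_normalizer _
    rw [Subgroup.mem_centralizer_iff]
    intro v hv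
    exact (h u hu v hv).symm
  rw [inf_eq_left.mpr h2] at h1
  have h3 : (P : Subgroup G) ≤ P' := by rw [h1]; exact inf_le_right
  exact (Sylow.ext (P.is_maximal' P'.2 h3)).symm

theorem TI (c : PQCtx G Ω T p q) (P P' : Sylow p G) {x : G} (hx : x ∈ P) (hx' : x ∈ P')
    (h1 : x ≠ 1) : P = P' := by
  apply eq_of_commute
  intro u hu v hv
  have hfix : ∀ b : Ω, x • b ≠ b → (u * v) • b = (v * u) • b := by
    intro b hb
    obtain ⟨i, hi⟩ := c.orb_zpow P hx hb hu
    obtain ⟨j, hj⟩ := c.orb_zpow P' hx' hb hv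
    have cu : ∀ k : ℤ, u * x ^ k = x ^ k * u := fun k =>
      (show Commute u x from c.comm_P P hu hx).zpow_right k
    have cv : ∀ k : ℤ, v * x ^ k = x ^ k * v := fun k =>
      (show Commute v x from c.comm_P P' hv hx').zpow_right k
    rw [mul_smul, hj, ← mul_smul, cu, mul_smul, hi, mul_smul, hi, ← mul_smul v, cv, mul_smul _ v,
      hj, ← mul_smul, ← mul_smul, ← zpow_add, ← zpow_add, add_comm]
  by_contra hne
  have hy : (v * u)⁻¹ * (u * v) ≠ 1 := by
    intro h
    apply hne
    rw [inv_mul_eq_one] at h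
    exact h.symm
  have a1 := c.two_fix hy
  have a2 := c.two_fix h1
  have hsub : (fixedBy Ω x)ᶜ ⊆ fixedBy Ω ((v * u)⁻¹ * (u * v)) := by
    intro b hb
    rw [mem_fixedBy, mul_smul, hfix b hb, inv_smul_smul]
  have a3 := Set.ncard_le_ncard hsub (Set.toFinite _)
  have a4 := Set.ncard_add_ncard_compl (fixedBy Ω x)
  rw [c.card] at a4
  omega

theorem cop (P : Sylow p G) : Nat.Coprime (P : Subgroup G).index p :=
  ((Nat.Prime.coprime_iff_not_dvd (Fact.out : p.Prime)).mpr P.not_dvd_index).symm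

theorem pow_mem (P : Sylow p G) {g : G} (hg : g ∈ Subgroup.centralizer (P : Set G)) :
    g ^ (P : Subgroup G).index ∈ P := by
  set y := g ^ (P : Subgroup G).index with hy
  have hyc : y ∈ Subgroup.centralizer (P : Set G) := Subgroup.pow_mem _ hg _
  have hz : IsPGroup p (Subgroup.zpowers y) := by
    obtain ⟨n, hn⟩ := (IsPGroup.iff_card).mp P.2
    have h1 : y ^ p ^ n = 1 := by
      rw [← hn, hy, ← pow_mul, Subgroup.index_mul_card, pow_card_eq_one']
    rintro ⟨_, i, rfl⟩
    refine ⟨n, Subtype.ext ?_⟩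
    change (y ^ i) ^ p ^ n = 1
    rw [← zpow_natCast, ← zpow_mul, mul_comm, zpow_mul, zpow_natCast, h1, one_zpow]
  have h1 := hz.inf_normalizer_sylow P
  have h2 : y ∈ Subgroup.zpowers y ⊓ Subgroup.normalizer (P : Set G) :=
    ⟨Subgroup.mem_zpowers y, Subgroup.centralizer_le_normalizer _ hyc⟩
  rw [h1] at h2
  exact h2.2

theorem pow_mul_C (c : PQCtx G Ω T p q) (P : Sylow p G) {g h : G}
    (hg : g ∈ Subgroup.centralizer (P : Set G)) (hh : h ∈ Subgroup.centralizer (P : Set G)) :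
    (g * h) ^ (P : Subgroup G).index = g ^ (P : Subgroup G).index * h ^ (P : Subgroup G).index := by
  set C := Subgroup.centralizer (P : Set G) with hC
  have hPC : (P : Subgroup G) ≤ C := by
    intro u hu
    rw [hC, Subgroup.mem_centralizer_iff]
    intro v hv
    exact c.comm_P P hv hu
  have h1 : (P : Subgroup G).subgroupOf C ≤ Subgroup.center C := by
    intro u hu
    rw [Subgroup.mem_center_iff]
    intro v
    apply Subtype.ext
    exact ((Subgroup.mem_centralizer_iff.mp v.2) u.1 hu).symm
  have h2 : (Subgroup.center C).index ∣ (P : Subgroup G).index :=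
    (Subgroup.index_dvd_of_le h1).trans (Dvd.intro _ (Subgroup.relIndex_mul_index hPC))
  obtain ⟨k, hk⟩ := h2
  have h3 : ∀ x : C, (x : G) ^ (Subgroup.center C).index =
      (((MonoidHom.transferCenterPow C) x : C) : G) := by
    intro x
    rw [MonoidHom.transferCenterPow_apply]; rfl
  have e := h3 (⟨g, hg⟩ * ⟨h, hh⟩)
  rw [map_mul] at e
  have e' : (g * h) ^ (Subgroup.center C).index =
    g ^ (Subgroup.center C).index * h ^ (Subgroup.center C).index := by
    rw [show g ^ (Subgroup.center C).index = _ from h3 ⟨g, hg⟩,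
      show h ^ (Subgroup.center C).index = _ from h3 ⟨h, hh⟩]
    exact e
  rw [hk, pow_mul, pow_mul, pow_mul, e']
  apply Commute.mul_pow
  have hcen := Subgroup.mem_center_iff.mp ((MonoidHom.transferCenterPow C) ⟨g, hg⟩).2
    ⟨h ^ (Subgroup.center C).index, Subgroup.pow_mem _ hh _⟩
  have := congrArg Subtype.val hcen
  rw [show g ^ (Subgroup.center C).index = _ from h3 ⟨g, hg⟩]
  exact this.symm

end PQCtx

namespace PQCtx
variable {G Ω : Type*} [Group G] [MulAction G Ω] {T : Set G} {p q : ℕ}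
variable [Finite G] [Finite Ω] [FaithfulSMul G Ω] [IsPreprimitive G Ω]

theorem normal_trans (c : PQCtx G Ω T p q) (N : Subgroup G) [N.Normal] {x : G} (hx : x ∈ N)
    (h1 : x ≠ 1) : IsPretransitive N Ω := by
  apply IsQuasiPreprimitive.isPretransitive_of_normal (G := G)
  intro h
  apply h1
  apply FaithfulSMul.eq_of_smul_eq_smul (α := Ω)
  intro b
  have hb : b ∈ fixedPoints N Ω := by rw [h]; trivial
  rw [one_smul]
  exact hb ⟨x, hx⟩

theorem dvd_of_trans (c : PQCtx G Ω T p q) (N : Subgroup G) [IsPretransitive N Ω] :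
    p * q ∣ Nat.card N := by
  have : 0 < Nat.card Ω := by rw [c.card]; exact Nat.mul_pos c.hp.pos c.hq.pos
  obtain ⟨a⟩ := (Nat.card_pos_iff.mp this).1
  have h := (stabilizer N a).index_dvd_card
  rwa [index_stabilizer, orbit_eq_univ, Set.ncard_univ, c.card] at h

variable [Fact p.Prime]

theorem mem_smul {g u : G} {P : Sylow p G} : u ∈ g • P ↔ g⁻¹ * u * g ∈ P := by
  rw [Sylow.smul_def]
  change u ∈ (MulAut.conj g • (P : Subgroup G)) ↔ _
  rw [Subgroup.mem_pointwise_smul_iff_inv_smul_mem, ← map_inv]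
  simp [MulAut.smul_def]
  rfl

theorem cenT_conj (c : PQCtx G Ω T p q) {P : Sylow p G} {t : G} (ht : t ∈ cenT T P) (g : G) :
    g * t * g⁻¹ ∈ cenT T (g • P : Sylow p G) := by
  refine ⟨c.conj t ht.1 g, fun u hu => ?_⟩
  have h := ht.2 _ (mem_smul.mp hu)
  calc u * (g * t * g⁻¹) = g * ((g⁻¹ * u * g) * t) * g⁻¹ := by group
    _ = g * (t * (g⁻¹ * u * g)) * g⁻¹ := by rw [h]
    _ = _ := by group

theorem index_eq (P P' : Sylow p G) : (P : Subgroup G).index = (P' : Subgroup G).index := by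
  have h1 := (P : Subgroup G).index_mul_card
  have h2 := (P' : Subgroup G).index_mul_card
  rw [P.card_eq_multiplicity] at h1
  rw [P'.card_eq_multiplicity] at h2
  exact Nat.eq_of_mul_eq_mul_right (pow_pos (Fact.out : p.Prime).pos _) (h1.trans h2.symm)

theorem count (c : PQCtx G Ω T p q) (Q : G → Prop) (hQ : ∀ g t, Q t → Q (g * t * g⁻¹))
    (hQ1 : ∀ t, Q t → t ≠ 1)
    (hdis : ∀ P P' : Sylow p G, ∀ t, t ∈ cenT T P → t ∈ cenT T P' → Q t → P = P')
    (P : Sylow p G) :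
    Nat.card (Sylow p G) * {t | t ∈ cenT T P ∧ Q t}.ncard + 1 ≤ p * q := by
  classical
  have := Fintype.ofFinite (Sylow p G)
  have := Fintype.ofFinite G
  let A : Sylow p G → Finset G := fun P' => {t | t ∈ cenT T P' ∧ Q t}.toFinset
  have hA : ∀ P' t, t ∈ A P' ↔ t ∈ cenT T P' ∧ Q t := fun P' t => by simp [A]
  have hle : ∀ P', (A P).card ≤ (A P').card := by
    intro P'
    obtain ⟨g, rfl⟩ := exists_smul_eq G P P'
    apply Finset.card_le_card_of_injOn (fun t => g * t * g⁻¹)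
    · intro t ht
      have ht := (hA _ _).mp ht
      exact (hA _ _).mpr ⟨c.cenT_conj ht.1 g, hQ g t ht.2⟩
    · intro s _ t _ h
      simpa using h
  have h1 : (Finset.univ.biUnion A).card = ∑ P', (A P').card := by
    apply Finset.card_biUnion
    intro P1 _ P2 _ hne
    rw [Function.onFun, Finset.disjoint_left]
    intro t h1 h2
    exact hne (hdis P1 P2 t ((hA _ _).mp h1).1 ((hA _ _).mp h2).1 ((hA _ _).mp h1).2)
  have h2 : Nat.card (Sylow p G) * (A P).card ≤ ∑ P', (A P').card := by
    rw [Nat.card_eq_fintype_card, ← Finset.card_univ, ← smul_eq_mul]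
    exact Finset.card_nsmul_le_sum _ _ _ (fun P' _ => hle P')
  have h3 : insert 1 (Finset.univ.biUnion A) ⊆ T.toFinset := by
    intro t ht
    rw [Finset.mem_insert] at ht
    rw [Set.mem_toFinset]
    rcases ht with rfl | ht
    · exact c.one
    · obtain ⟨P', -, h⟩ := Finset.mem_biUnion.mp ht
      exact ((hA _ _).mp h).1.1
  have h4 := Finset.card_le_card h3
  rw [Finset.card_insert_of_notMem, h1, ← Set.ncard_eq_toFinset_card', c.cardT] at h4
  · rw [Set.ncard_eq_toFinset_card']
    change Nat.card (Sylow p G) * (A P).card + 1 ≤ p * q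
    omega
  · intro h
    obtain ⟨P', -, h⟩ := Finset.mem_biUnion.mp h
    exact hQ1 1 ((hA _ _).mp h).2 rfl

/-- `p'`-elements of `cenT` -/
def L1 (T : Set G) (P : Sylow p G) : Set G := {t | t ∈ cenT T P ∧ t ^ (P : Subgroup G).index = 1}

theorem cen_of {P : Sylow p G} {t : G} (h : t ∈ cenT T P) :
    t ∈ Subgroup.centralizer (P : Set G) := by
  rw [Subgroup.mem_centralizer_iff]
  exact fun u hu => h.2 u hu

theorem P_le_cen (c : PQCtx G Ω T p q) (P : Sylow p G) {u : G} (hu : u ∈ P) :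
    u ∈ Subgroup.centralizer (P : Set G) := by
  rw [Subgroup.mem_centralizer_iff]
  exact fun v hv => c.comm_P P hv hu

theorem fix_of_pow (P : Sylow p G) {u : G} (hu : u ∈ P) {a : Ω}
    (h : u ^ (P : Subgroup G).index • a = a) : u • a = a := by
  have hc := cop P
  obtain ⟨n, hn⟩ := (IsPGroup.iff_card).mp P.2
  have hu1 : u ^ p ^ n = 1 := by
    rw [← hn]
    have := pow_card_eq_one' (x := (⟨u, hu⟩ : (P : Subgroup G)))
    exact congrArg Subtype.val this
  have h2 : u ^ p ^ n • a = a := by rw [hu1, one_smul]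
  have h3 : u ^ (Nat.gcd (P : Subgroup G).index (p ^ n)) ∈ stabilizer G a := by
    rw [← zpow_natCast, Nat.gcd_eq_gcd_ab, zpow_add, zpow_mul, zpow_mul]
    apply mul_mem <;> apply zpow_mem <;> rw [zpow_natCast] <;> assumption
  rw [Nat.Coprime.gcd_eq_one (hc.pow_right n), pow_one] at h3
  exact h3

theorem L1_inj (c : PQCtx G Ω T p q) (P : Sylow p G) {t t' u : G} (ht : t ∈ L1 T P)
    (ht' : t' ∈ L1 T P) (hu : u ∈ P) {a : Ω} (h : t' • a = u • t • a) : t = t' := by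
  set b := (P : Subgroup G).index with hb
  have e1 := cen_of ht.1
  have e2 := cen_of ht'.1
  have e3 := c.P_le_cen P hu
  have hg : (t⁻¹ * (u⁻¹ * t')) • a = a := by
    rw [mul_smul, mul_smul, h, inv_smul_smul, inv_smul_smul]
  have hp : (t⁻¹ * (u⁻¹ * t')) ^ b = (u ^ b)⁻¹ := by
    rw [c.pow_mul_C P (inv_mem e1) (mul_mem (inv_mem e3) e2), c.pow_mul_C P (inv_mem e3) e2,
      inv_pow, inv_pow, ht.2, ht'.2]
    simp [hb]
  have hub : u ^ b • a = a := by
    have : (u ^ b)⁻¹ ∈ stabilizer G a := by rw [← hp]; exact (stabilizer G a).pow_mem hg b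
    exact inv_mem_iff.mp this
  have hua := fix_of_pow P hu hub
  apply c.uniq _ ht.1.1 _ ht'.1.1 a
  rw [h, ← mul_smul, ht.1.2 u hu, mul_smul, hua]

theorem L1_orbit (c : PQCtx G Ω T p q) (P : Sylow p G) (R : Subgroup G)
    (hP : (P : Subgroup G) ≤ R) (hL : L1 T P ⊆ R) (a : Ω) :
    p * (L1 T P).ncard ≤ (orbit R a).ncard := by
  classical
  have := Fintype.ofFinite G
  have := Fintype.ofFinite Ω
  let f : G → Finset Ω := fun t => (orbit (P : Subgroup G) (t • a)).toFinset
  have h1 : ((L1 T P).toFinset.biUnion f).card = ∑ t ∈ (L1 T P).toFinset, (f t).card := by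
    apply Finset.card_biUnion
    intro t ht t' ht' hne
    rw [Finset.mem_coe, Set.mem_toFinset] at ht ht'
    rw [Function.onFun, Finset.disjoint_left]
    intro b hb hb'
    rw [Set.mem_toFinset] at hb hb'
    have h := (orbit_eq_iff.mpr hb).symm.trans (orbit_eq_iff.mpr hb')
    have : t' • a ∈ orbit (P : Subgroup G) (t • a) := by rw [h]; exact mem_orbit_self _
    obtain ⟨u, hu⟩ := this
    exact hne (c.L1_inj P ht ht' u.2 hu.symm)
  have h2 : ∀ t, (f t).card = p := by
    intro t
    rw [← Set.ncard_eq_toFinset_card', c.orbit_card]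
  rw [Finset.sum_congr rfl (fun t _ => h2 t), Finset.sum_const, smul_eq_mul,
    ← Set.ncard_eq_toFinset_card', mul_comm] at h1
  rw [← h1, Set.ncard_eq_toFinset_card']
  apply Finset.card_le_card
  intro b hb
  obtain ⟨t, ht, hb⟩ := Finset.mem_biUnion.mp hb
  rw [Set.mem_toFinset] at ht hb ⊢
  obtain ⟨u, rfl⟩ := hb
  exact ⟨⟨u.1 * t, mul_mem (hP u.2) (hL ht)⟩, mul_smul _ _ _⟩

theorem L1_le (c : PQCtx G Ω T p q) (P : Sylow p G) : (L1 T P).ncard ≤ q := by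
  have : 0 < Nat.card Ω := by rw [c.card]; exact Nat.mul_pos c.hp.pos c.hq.pos
  obtain ⟨a⟩ := (Nat.card_pos_iff.mp this).1
  have h := c.L1_orbit P ⊤ le_top (fun _ _ => trivial) a
  have h2 := Set.ncard_le_card (orbit (⊤ : Subgroup G) a)
  rw [c.card] at h2
  exact Nat.le_of_mul_le_mul_left (h.trans h2) c.hp.pos

theorem one_mem_S (c : PQCtx G Ω T p q) (P : Subgroup G) : (1 : G) ∈ cenT T P :=
  ⟨c.one, fun u _ => by simp⟩

theorem dvd_S (c : PQCtx G Ω T p q) (P : Sylow p G) : p ∣ (cenT T P).ncard := by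
  have h := conj_modEq (P : Subgroup G) P.2 T (fun u _ a ha => c.conj a ha u)
  rw [c.cardT] at h
  exact (Nat.modEq_zero_iff_dvd).mp (h.symm.trans ((Nat.modEq_zero_iff_dvd).mpr (Dvd.intro q rfl)))

theorem S_split (P : Sylow p G) : (cenT T P).ncard = (L1 T P).ncard +
    {t | t ∈ cenT T P ∧ t ^ (P : Subgroup G).index ≠ 1}.ncard := by
  rw [← Set.ncard_union_eq]
  · congr 1
    ext t
    simp only [L1, Set.mem_union, Set.mem_ofPred_eq]
    tauto
  · rw [Set.disjoint_left]
    exact fun t h1 h2 => h2.2 h1.2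

theorem count_D (c : PQCtx G Ω T p q) (P : Sylow p G) : Nat.card (Sylow p G) *
    {t | t ∈ cenT T P ∧ t ^ (P : Subgroup G).index ≠ 1}.ncard + 1 ≤ p * q := by
  apply c.count (fun t => t ^ (P : Subgroup G).index ≠ 1)
  · intro g t h h'
    apply h
    rw [conj_pow] at h'
    simpa using h'
  · rintro t h rfl
    exact h (one_pow _)
  · intro P1 P2 t h1 h2 h
    refine c.TI P1 P2 (x := t ^ (P : Subgroup G).index) ?_ ?_ h
    · rw [index_eq P P1]; exact pow_mem P1 (cen_of h1)
    · rw [index_eq P P2]; exact pow_mem P2 (cen_of h2)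

theorem exists_ne (c : PQCtx G Ω T p q) (P : Sylow p G) : ∃ P' : Sylow p G, P' ≠ P := by
  by_contra h
  push Not at h
  have hN : (P : Subgroup G).Normal := by
    rw [← Subgroup.normalizer_eq_top_iff, eq_top_iff]
    intro g _
    exact Sylow.smul_eq_iff_mem_normalizer.mp (h (g • P))
  have : 0 < Nat.card Ω := by rw [c.card]; exact Nat.mul_pos c.hp.pos c.hq.pos
  obtain ⟨a⟩ := (Nat.card_pos_iff.mp this).1
  obtain ⟨u, hu, hua⟩ := c.exists_move P a
  have := c.normal_trans (P : Subgroup G) hu (by rintro rfl; simp at hua)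
  have h2 := c.orbit_card P a
  rw [orbit_eq_univ, Set.ncard_univ, c.card] at h2
  have := c.hq.two_le
  have := c.hp.pos
  nlinarith

theorem norm_P (P P' : Sylow p G) {u : G} (hu : u ∈ P) (h : u • P' = P') : u ∈ P' := by
  have h1 := P.2.inf_normalizer_sylow P'
  have h2 : u ∈ (P : Subgroup G) ⊓ Subgroup.normalizer (P' : Set G) :=
    ⟨hu, Sylow.smul_eq_iff_mem_normalizer.mp h⟩
  rw [h1] at h2
  exact h2.2

theorem orbit_syl (c : PQCtx G Ω T p q) (P P' : Sylow p G) (hne : P' ≠ P) :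
    (orbit (P : Subgroup G) P').ncard = Nat.card P ∧ P ∉ orbit (P : Subgroup G) P' := by
  constructor
  · rw [← index_stabilizer]
    have : stabilizer (P : Subgroup G) P' = ⊥ := by
      rw [eq_bot_iff]
      intro u hu
      have h1 : (u : G) • P' = P' := hu
      rw [Subgroup.mem_bot]
      by_contra h
      apply hne
      exact (c.TI P P' u.2 (norm_P P P' u.2 h1) (fun h' => h (Subtype.ext h'))).symm
    rw [this, Subgroup.index_bot]
  · rintro ⟨u, hu⟩
    have hu' : (u : G) • P' = P := hu
    apply hne
    have h3 : (u : G) • P = P :=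
      Sylow.smul_eq_iff_mem_normalizer.mpr (Subgroup.le_normalizer u.2)
    exact smul_left_cancel _ (hu'.trans h3.symm)

end PQCtx

namespace PQCtx
variable {G Ω : Type*} [Group G] [MulAction G Ω] {T : Set G} {p q : ℕ}
variable [Finite G] [Finite Ω] [FaithfulSMul G Ω] [IsPreprimitive G Ω]
variable [Fact p.Prime]

theorem basics (c : PQCtx G Ω T p q) (P : Sylow p G) :
    Nat.card P = p ∧ (cenT T P).ncard = p ∧ p + 1 ≤ Nat.card (Sylow p G) ∧
    Nat.card (Sylow p G) + 1 ≤ p * q := by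
  have hD := c.count_D P
  have hs := S_split (T := T) P
  have hL := c.L1_le P
  have hdv := c.dvd_S P
  have hlt := c.hlt
  have hq2 := c.hq.two_le
  set d := {t | t ∈ cenT T P ∧ t ^ (P : Subgroup G).index ≠ 1}.ncard
  set m := Nat.card (Sylow p G)
  have hpos : 0 < (cenT T P).ncard := by
    rw [Set.ncard_pos]
    exact ⟨1, c.one_mem_S _⟩
  have hsp : p ≤ (cenT T P).ncard := Nat.le_of_dvd hpos hdv
  have hd : 1 ≤ d := by omega
  obtain ⟨P', hne⟩ := c.exists_ne P
  obtain ⟨h1, h2⟩ := c.orbit_syl P P' hne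
  have hm : Nat.card P + 1 ≤ m := by
    rw [← h1, ← Set.ncard_insert_of_notMem h2]
    exact Set.ncard_le_card _
  have hmm : m + 1 ≤ p * q := by nlinarith
  have hcard : Nat.card P = p := by
    obtain ⟨k, hk⟩ := (IsPGroup.iff_card).mp P.2
    change Nat.card P = p ^ k at hk
    have k2 : k < 2 := by
      by_contra h
      have : p ^ 2 ≤ p ^ k := Nat.pow_le_pow_right c.hp.pos (by omega)
      nlinarith
    interval_cases k
    · exfalso
      have : 0 < Nat.card Ω := by rw [c.card]; exact Nat.mul_pos c.hp.pos c.hq.pos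
      obtain ⟨a⟩ := (Nat.card_pos_iff.mp this).1
      have h3 := (stabilizer (P : Subgroup G) a).index_dvd_card
      rw [index_stabilizer, c.orbit_card] at h3
      change p ∣ Nat.card P at h3
      rw [hk, pow_zero] at h3
      exact c.hp.one_lt.ne' (Nat.dvd_one.mp h3)
    · simpa using hk
  rw [hcard] at hm
  refine ⟨hcard, ?_, hm, hmm⟩
  have hdq : d < q := by
    by_contra h
    have : (p + 1) * q ≤ m * d := Nat.mul_le_mul hm (by omega)
    nlinarith
  obtain ⟨k, hk⟩ := hdv
  have : k < 2 := by
    by_contra h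
    have : p * 2 ≤ p * k := Nat.mul_le_mul_left p (by omega)
    omega
  interval_cases k
  · omega
  · omega

theorem cent_S (c : PQCtx G Ω T p q) (P : Sylow p G) {y : G} {a : Ω}
    (hy : y ∈ Subgroup.centralizer (P : Set G)) (ha : y • a = a) :
    ∀ t ∈ cenT T P, y * t = t * y := by
  have hyc : ∀ u ∈ P, u * y = y * u := fun u hu => (Subgroup.mem_centralizer_iff.mp hy) u hu
  let A : Set G := {t | t ∈ T ∧ y * t = t * y}
  have hA : A.ncard = (fixedBy Ω y).ncard := by
    apply Set.ncard_congr (fun t _ => t • a)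
    · intro t ht
      rw [mem_fixedBy, ← mul_smul, ht.2, mul_smul, ha]
    · intro s t hs ht h
      exact c.uniq s hs.1 t ht.1 a h
    · intro b hb
      obtain ⟨t, ht, rfl⟩ := c.ex a b
      exact ⟨t, ⟨ht, c.comm_of ht ha hb⟩, rfl⟩
  have hF : p ∣ (fixedBy Ω y).ncard := by
    let _ : MulAction (P : Subgroup G) (fixedBy Ω y) :=
      { smul := fun u b => ⟨u.1 • b.1, by
          rw [mem_fixedBy, ← mul_smul, ← hyc u.1 u.2, mul_smul, mem_fixedBy.mp b.2]⟩
        one_smul := fun b => Subtype.ext (one_smul G b.1)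
        mul_smul := fun u v b => Subtype.ext (mul_smul u.1 v.1 b.1) }
    have h := IsPGroup.card_modEq_card_fixedPoints P.2 (fixedBy Ω y)
    have he : fixedPoints (P : Subgroup G) (fixedBy Ω y) = ∅ := by
      rw [Set.eq_empty_iff_forall_notMem]
      intro b hb
      obtain ⟨u, hu, hub⟩ := c.exists_move P b.1
      exact hub (congrArg Subtype.val (hb ⟨u, hu⟩))
    have h' : Nat.card (fixedPoints (P : Subgroup G) (fixedBy Ω y)) = 0 := by
      rw [he]; simp
    have h2 : Nat.card (fixedBy Ω y) ≡ 0 [MOD p] := h.trans (by rw [← h'])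
    rw [Nat.card_coe_set_eq] at h2
    exact (Nat.modEq_zero_iff_dvd).mp h2
  have h1 := conj_modEq (P : Subgroup G) P.2 A (by
    intro u hu t ht
    refine ⟨c.conj t ht.1 u, ?_⟩
    have e := hyc u hu
    have e' : y * u⁻¹ = u⁻¹ * y := by
      have := hyc u⁻¹ (inv_mem hu)
      exact this.symm
    calc y * (u * t * u⁻¹) = (y * u) * t * u⁻¹ := by group
      _ = u * (y * t) * u⁻¹ := by rw [← e]; group
      _ = u * t * (y * u⁻¹) := by rw [ht.2]; group
      _ = u * t * u⁻¹ * y := by rw [e']; group)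
  have h2 : p ∣ (cenT A P).ncard := by
    rw [hA] at h1
    exact (Nat.modEq_zero_iff_dvd).mp (h1.symm.trans ((Nat.modEq_zero_iff_dvd).mpr hF))
  have hsub : cenT A P ⊆ cenT T P := fun t ht => ⟨ht.1.1, ht.2⟩
  have h3 : 0 < (cenT A P).ncard := by
    rw [Set.ncard_pos]
    exact ⟨1, ⟨⟨c.one, by simp⟩, fun u _ => by simp⟩⟩
  have h4 := Nat.le_of_dvd h3 h2
  have h5 := Set.eq_of_subset_of_ncard_le hsub (by rw [(c.basics P).2.1]; exact h4)
    (Set.toFinite _)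
  intro t ht
  rw [← h5] at ht
  exact ht.1.2

theorem exists_L1 (c : PQCtx G Ω T p q) (P : Sylow p G) : ∃ l ∈ L1 T P, l ≠ 1 := by
  obtain ⟨-, h2, h3, -⟩ := c.basics P
  have hD := c.count_D P
  have hs := S_split (T := T) P
  have hlt := c.hlt
  by_contra h
  push Not at h
  have hle : (L1 T P).ncard ≤ 1 := by
    rw [Set.ncard_le_one_iff_subsingleton]
    intro x hx y hy
    rw [h x hx, h y hy]
  set d := {t | t ∈ cenT T P ∧ t ^ (P : Subgroup G).index ≠ 1}.ncard
  have hp1 := c.hp.pos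
  have hd : p ≤ d + 1 := by omega
  have : (p + 1) * d ≤ Nat.card (Sylow p G) * d := Nat.mul_le_mul_right d h3
  nlinarith

theorem pow_ne (P : Sylow p G) {u : G} (hu : u ∈ P) (c : PQCtx G Ω T p q)
    (h : u ^ (P : Subgroup G).index = 1) : u = 1 := by
  apply FaithfulSMul.eq_of_smul_eq_smul (α := Ω)
  intro b
  rw [one_smul]
  exact fix_of_pow P hu (by rw [h, one_smul])

theorem not_small (c : PQCtx G Ω T p q) (P : Sylow p G) :
    Nat.card (Sylow p G) ≠ p + 1 := by
  intro hm
  obtain ⟨l, hl, hl1⟩ := c.exists_L1 P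
  obtain ⟨P', hne⟩ := c.exists_ne P
  obtain ⟨h1, h2⟩ := c.orbit_syl P P' hne
  rw [(c.basics P).1] at h1
  have huniv : insert P (orbit (P : Subgroup G) P') = Set.univ := by
    rw [Set.eq_univ_iff_ncard, Set.ncard_insert_of_notMem h2, h1, hm]
  have fixP : ∀ k ∈ Subgroup.centralizer (P : Set G), k • P = P := fun k hk =>
    Sylow.smul_eq_iff_mem_normalizer.mpr (Subgroup.centralizer_le_normalizer _ hk)
  have hlc := cen_of hl.1
  have hlP' : l • P' ∈ insert P (orbit (P : Subgroup G) P') := by rw [huniv]; trivial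
  rcases hlP' with h | ⟨u, hu⟩
  · exact hne (smul_left_cancel l (h.trans (fixP l hlc).symm))
  have hu' : (u : G) • P' = l • P' := hu
  set k := (u : G)⁻¹ * l with hk
  have hkc : k ∈ Subgroup.centralizer (P : Set G) :=
    mul_mem (inv_mem (c.P_le_cen P u.2)) hlc
  have hkP' : k • P' = P' := by rw [hk, mul_smul, ← hu', inv_smul_smul]
  have hkK : k ∈ (MulAction.toPermHom G (Sylow p G)).ker := by
    rw [MonoidHom.mem_ker]
    ext1 P2
    change k • P2 = P2
    have : P2 ∈ insert P (orbit (P : Subgroup G) P') := by rw [huniv]; trivial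
    rcases this with rfl | ⟨v, hv⟩
    · exact fixP k hkc
    · have hv' : (v : G) • P' = P2 := hv
      rw [← hv', ← mul_smul, ← (Subgroup.mem_centralizer_iff.mp hkc) v.1 v.2, mul_smul, hkP']
  have hk1 : k ≠ 1 := by
    intro h
    rw [hk, inv_mul_eq_one] at h
    apply hl1
    rw [← h]
    exact pow_ne P u.2 c (by rw [h]; exact hl.2)
  have := c.normal_trans _ hkK hk1
  have hdv : p ∣ Nat.card (MulAction.toPermHom G (Sylow p G)).ker :=
    (Dvd.intro q rfl).trans (c.dvd_of_trans _)
  obtain ⟨x, hx⟩ := exists_prime_orderOf_dvd_card' p hdv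
  have hz : IsPGroup p (Subgroup.zpowers (x : G)) := by
    apply IsPGroup.of_card (n := 1)
    rw [Nat.card_zpowers, Subgroup.orderOf_coe, hx, pow_one]
  obtain ⟨P1, hP1⟩ := hz.exists_le_sylow
  obtain ⟨P2, hP2⟩ := c.exists_ne P1
  have hx1 : (x : G) ∈ P1 := hP1 (Subgroup.mem_zpowers _)
  have hx2 : (x : G) • P2 = P2 := by
    have := x.2
    rw [MonoidHom.mem_ker] at this
    exact congrArg (fun f : Equiv.Perm (Sylow p G) => f P2) this
  have hxne : (x : G) ≠ 1 := by
    intro h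
    rw [← Subgroup.orderOf_coe, h, orderOf_one] at hx
    exact c.hp.one_lt.ne hx
  exact hP2 (c.TI P1 P2 hx1 (norm_P P1 P2 hx1 hx2) hxne).symm

/-- the group generated by `P` and `L1` -/
def RR (T : Set G) (P : Sylow p G) : Subgroup G := Subgroup.closure (L1 T P ∪ (P : Set G))

theorem RR_trans (c : PQCtx G Ω T p q) (P : Sylow p G) (a : Ω) :
    orbit (RR T P) a = Set.univ := by
  by_contra hne
  obtain ⟨b, hb⟩ := (Set.ne_univ_iff_exists_notMem _).mp hne
  have hP : (P : Subgroup G) ≤ RR T P := fun u hu => Subgroup.subset_closure (Or.inr hu)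
  have hL : L1 T P ⊆ RR T P := fun u hu => Subgroup.subset_closure (Or.inl hu)
  have h1 := c.L1_orbit P _ hP hL a
  have h2 := c.L1_orbit P _ hP hL b
  have hdis : Disjoint (orbit (RR T P) a) (orbit (RR T P) b) := by
    rw [Set.disjoint_left]
    intro x hx hx'
    apply hb
    rw [(orbit_eq_iff.mpr hx).symm, orbit_eq_iff.mpr hx']
    exact mem_orbit_self b
  have h3 := Set.ncard_union_eq hdis
  have h4 := Set.ncard_le_card (orbit (RR T P) a ∪ orbit (RR T P) b)
  rw [c.card] at h4
  have hl : 2 * (L1 T P).ncard ≤ q := by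
    apply Nat.le_of_mul_le_mul_left _ c.hp.pos
    calc p * (2 * (L1 T P).ncard) = p * (L1 T P).ncard + p * (L1 T P).ncard := by ring
      _ ≤ p * q := by omega
  apply c.not_small P
  obtain ⟨-, hS, hm, -⟩ := c.basics P
  have hD := c.count_D P
  have hs := S_split (T := T) P
  have hmod := card_sylow_modEq_one p G
  have hlt := c.hlt
  set d := {t | t ∈ cenT T P ∧ t ^ (P : Subgroup G).index ≠ 1}.ncard
  set m := Nat.card (Sylow p G)
  by_contra hmne
  obtain ⟨j, hj⟩ := (Nat.modEq_iff_dvd' (by omega : 1 ≤ m)).mp hmod.symm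
  have hj2 : 2 ≤ j := by
    by_contra h
    interval_cases j <;> omega
  have hm2 : 2 * p + 1 ≤ m := by
    have : p * 2 ≤ p * j := Nat.mul_le_mul_left p hj2
    omega
  have h5 : (2 * p + 1) * d ≤ m * d := Nat.mul_le_mul_right d hm2
  have h6 : 2 * p ≤ q + 2 * d := by omega
  nlinarith

theorem modEq_ge (hp : 1 < p) {m : ℕ} (h : m ≡ 1 [MOD p]) (h1 : m ≠ 1) : p + 1 ≤ m := by
  by_contra hlt
  have : m % p = 1 % p := h
  rw [Nat.mod_eq_of_lt hp] at this
  rcases Nat.lt_or_ge m p with h2 | h2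
  · rw [Nat.mod_eq_of_lt h2] at this
    exact h1 this
  · have : m = p := by omega
    subst this
    simp at *

theorem card_M (c : PQCtx G Ω T p q) (P : Sylow p G) :
    Nat.card (Subgroup.closure (L1 T P)) = q ∧
      Subgroup.closure (L1 T P) ≤ Subgroup.centralizer (P : Set G) := by
  have : 0 < Nat.card Ω := by rw [c.card]; exact Nat.mul_pos c.hp.pos c.hq.pos
  obtain ⟨a⟩ := (Nat.card_pos_iff.mp this).1
  have hRC : RR T P ≤ Subgroup.centralizer (P : Set G) := by
    rw [RR, Subgroup.closure_le]
    rintro x (hx | hx)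
    · exact cen_of hx.1
    · exact c.P_le_cen P hx
  have hMR : Subgroup.closure (L1 T P) ≤ RR T P := Subgroup.closure_mono Set.subset_union_left
  refine ⟨?_, hMR.trans hRC⟩
  have hst : stabilizer (RR T P) a = ⊥ := by
    rw [eq_bot_iff]
    intro y hy
    have hya : (y : G) • a = a := hy
    have hyS := c.cent_S P (hRC y.2) hya
    have hcom : RR T P ≤ Subgroup.centralizer {(y : G)} := by
      refine (Subgroup.closure_le _).mpr ?_
      rintro x (hx | hx)
      · rw [SetLike.mem_coe, Subgroup.mem_centralizer_singleton_iff]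
        exact (hyS x hx.1).symm
      · rw [SetLike.mem_coe, Subgroup.mem_centralizer_singleton_iff]
        exact (Subgroup.mem_centralizer_iff.mp (hRC y.2)) x hx
    rw [Subgroup.mem_bot]
    apply Subtype.ext
    apply FaithfulSMul.eq_of_smul_eq_smul (α := Ω)
    intro b
    have hb : b ∈ orbit (RR T P) a := by rw [c.RR_trans]; trivial
    obtain ⟨r, rfl⟩ := hb
    have := Subgroup.mem_centralizer_singleton_iff.mp (hcom r.2)
    change (y : G) • (r : G) • a = (1 : G) • (r : G) • a
    rw [← mul_smul, ← this, mul_smul, hya, one_smul]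
  have hR : Nat.card (RR T P) = p * q := by
    rw [← Subgroup.index_bot, ← hst, index_stabilizer, c.RR_trans, Set.ncard_univ, c.card]
  have hdv := Subgroup.card_dvd_of_le hMR
  rw [hR] at hdv
  have hker : ∀ x ∈ Subgroup.closure (L1 T P), x ^ (P : Subgroup G).index = 1 := by
    intro x hx
    induction hx using Subgroup.closure_induction with
    | mem x hx => exact hx.2
    | one => exact one_pow _
    | mul x y hx hy h1 h2 =>
      rw [c.pow_mul_C P (hRC (hMR hx)) (hRC (hMR hy)), h1, h2, one_mul]
    | inv x _ h => rw [inv_pow, h, inv_one]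
  have hnp : ¬ p ∣ Nat.card (Subgroup.closure (L1 T P)) := by
    intro h
    obtain ⟨x, hx⟩ := exists_prime_orderOf_dvd_card' p h
    have h1 := hker x x.2
    have h2 := orderOf_dvd_of_pow_eq_one h1
    rw [Subgroup.orderOf_coe, hx] at h2
    exact P.not_dvd_index h2
  have hq : Nat.card (Subgroup.closure (L1 T P)) ∣ q :=
    Nat.Coprime.dvd_of_dvd_mul_left ((c.hp.coprime_iff_not_dvd.mpr hnp).symm) hdv
  rcases (Nat.dvd_prime c.hq).mp hq with h | h
  · exfalso
    obtain ⟨l, hl, hl1⟩ := c.exists_L1 P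
    have := Subgroup.card_eq_one.mp h
    have h2 : l ∈ Subgroup.closure (L1 T P) := Subgroup.subset_closure hl
    rw [this] at h2
    exact hl1 h2
  · exact h

theorem norm_le (c : PQCtx G Ω T p q) (P : Sylow p G) :
    Subgroup.normalizer (Subgroup.closure (L1 T P) : Set G) ≤ Subgroup.normalizer (P : Set G) := by
  obtain ⟨hM, hMC⟩ := c.card_M P
  set M := Subgroup.closure (L1 T P) with hMdef
  set N := Subgroup.normalizer (M : Set G) with hN
  have hPN : (P : Subgroup G) ≤ N := by
    intro u hu
    apply Subgroup.centralizer_le_normalizer _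
    rw [Subgroup.mem_centralizer_iff]
    intro x hx
    exact ((Subgroup.mem_centralizer_iff.mp (hMC hx)) u hu).symm
  have hconj : ∀ g ∈ Subgroup.normalizer (P : Set G), ∀ x ∈ M, g * x * g⁻¹ ∈ M := by
    intro g hg x hx
    induction hx using Subgroup.closure_induction with
    | mem x hx =>
      apply Subgroup.subset_closure
      have h1 := c.cenT_conj hx.1 g
      rw [Sylow.smul_eq_iff_mem_normalizer.mpr hg] at h1
      refine ⟨h1, ?_⟩
      rw [conj_pow, hx.2]; group
    | one => simp
    | mul x y _ _ h1 h2 =>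
      have : g * (x * y) * g⁻¹ = (g * x * g⁻¹) * (g * y * g⁻¹) := by group
      rw [this]; exact mul_mem h1 h2
    | inv x _ h =>
      have : g * x⁻¹ * g⁻¹ = (g * x * g⁻¹)⁻¹ := by group
      rw [this]; exact inv_mem h
  have hle : Subgroup.normalizer (P : Set G) ≤ N := by
    intro g hg
    apply Subgroup.mem_normalizer_iff.mpr
    intro x
    refine ⟨hconj g hg x, fun h => ?_⟩
    have := hconj g⁻¹ (inv_mem hg) _ h
    have e : g⁻¹ * (g * x * g⁻¹) * g⁻¹⁻¹ = x := by group
    rwa [e] at this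
  have hidx := Subgroup.relIndex_mul_index hle
  rw [← P.card_eq_index_normalizer] at hidx
  have hm' : (Subgroup.normalizer (P : Set G)).relIndex N ≡ 1 [MOD p] := by
    have h1 := (P.subtype hPN).card_eq_index_normalizer
    have h2 := card_sylow_modEq_one p N
    rw [h1] at h2
    have h3 := Subgroup.subgroupOf_normalizer_eq hPN
    have h4 : (Subgroup.normalizer (P : Set G)).relIndex N =
      (Subgroup.normalizer ((P.subtype hPN : Sylow p N) : Set N)).index :=
      congrArg Subgroup.index h3
    rw [h4]; exact h2
  have hm := card_sylow_modEq_one p G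
  obtain ⟨-, -, hm1, hm2⟩ := c.basics P
  have hlt := c.hlt
  have hu : N.index ≡ 1 [MOD p] := by
    have h := hm'.mul_right N.index
    rw [hidx, one_mul] at h
    exact h.symm.trans hm
  have hu1 : N.index ≠ 1 := by
    intro h
    rw [Subgroup.index_eq_one, hN] at h
    have hnorm : M.Normal := Subgroup.normalizer_eq_top_iff.mp h
    obtain ⟨l, hl, hl1⟩ := c.exists_L1 P
    have := c.normal_trans M (Subgroup.subset_closure hl) hl1
    have h2 := c.dvd_of_trans M
    rw [hM] at h2
    have h3 := Nat.le_of_dvd c.hq.pos h2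
    have := c.hq.pos
    have := c.hp.two_le
    nlinarith
  have hu2 := modEq_ge c.hp.one_lt hu hu1
  rw [← Subgroup.relIndex_eq_one]
  by_contra hne
  have hm3 := modEq_ge c.hp.one_lt hm' hne
  have := Nat.mul_le_mul hm3 hu2
  rw [hidx] at this
  nlinarith

theorem false (c : PQCtx G Ω T p q) : False := by
  obtain ⟨P⟩ : Nonempty (Sylow p G) := inferInstance
  obtain ⟨-, hS, hm, -⟩ := c.basics P
  have h := c.count (fun t => t ≠ 1) (fun g t h h' => h (by simpa using h')) (fun t h => h) (by
    intro P1 P2 t h1 h2 ht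
    by_cases hb : t ^ (P1 : Subgroup G).index = 1
    · obtain ⟨hM, hMC⟩ := c.card_M P1
      have htM : t ∈ Subgroup.closure (L1 T P1) := Subgroup.subset_closure ⟨h1, hb⟩
      have hz : Subgroup.zpowers t = Subgroup.closure (L1 T P1) := by
        have hle : Subgroup.zpowers t ≤ Subgroup.closure (L1 T P1) := by
          rwa [Subgroup.zpowers_le]
        apply Subgroup.eq_of_le_of_card_ge hle
        have hd := Subgroup.card_dvd_of_le hle
        rw [hM] at hd ⊢
        rcases (Nat.dvd_prime c.hq).mp hd with h | h
        · exact absurd (Subgroup.zpowers_eq_bot.mp (Subgroup.card_eq_one.mp h)) ht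
        · exact h.ge
      have hle := c.norm_le P1
      rw [← hz] at hle
      have hP2 : (P2 : Subgroup G) ≤ Subgroup.normalizer (P1 : Set G) := by
        intro u hu
        apply hle
        apply Subgroup.centralizer_le_normalizer _
        rw [Subgroup.mem_centralizer_iff]
        rintro _ ⟨i, rfl⟩
        exact ((show Commute u t from h2.2 u hu).zpow_right i).symm
      have h3 := P2.2.inf_normalizer_sylow P1
      rw [inf_eq_left.mpr hP2] at h3
      have h4 : (P2 : Subgroup G) ≤ P1 := by rw [h3]; exact inf_le_right
      exact Sylow.ext (P2.is_maximal' P1.2 h4)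
    · refine c.TI P1 P2 (pow_mem P1 (cen_of h1)) ?_ hb
      rw [index_eq P1 P2]; exact pow_mem P2 (cen_of h2)) P
  have e : {t | t ∈ cenT T P ∧ t ≠ 1} = cenT T P \ {1} := by
    ext t; simp
  rw [e, Set.ncard_sdiff_singleton_of_mem (c.one_mem_S _), hS] at h
  have hlt := c.hlt
  have h2 := Nat.mul_le_mul_right (p - 1) hm
  obtain ⟨r, rfl⟩ : ∃ r, p = r + 1 := ⟨p - 1, by omega⟩
  simp only [Nat.add_sub_cancel] at h h2
  nlinarith

end PQCtx

theorem stmt_aux {G : Type*} [Group G] [Finite G] (p q : ℕ) (hp : p.Prime) (hq : q.Prime)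
    (hlt : q < p) (H : Subgroup G) (T : Set G)
    (hLF : IsLoopFolder H T) (hRCC : IsRCC T) (hFaith : IsFaithfulFolder H)
    (hord : Nat.card T = p * q) (hgen : Subgroup.closure T = ⊤) :
    ∃ K : Subgroup G, H < K ∧ K < ⊤ := by
  by_contra hno
  push Not at hno
  have hpq : 1 < p * q := by
    have := hp.two_le
    have := hq.two_le
    nlinarith
  have hne : H ≠ ⊤ := by
    intro h
    have h1 : ∀ x : G, x = 1 := fun x => hFaith x (fun g => by rw [h]; trivial)
    have : Subsingleton T := ⟨fun x y => Subtype.ext ((h1 x).trans (h1 y).symm)⟩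
    have := Finite.card_le_one_iff_subsingleton.mpr this
    omega
  have hco : IsCoatom H := by
    refine ⟨hne, fun K hK => ?_⟩
    by_contra h
    exact hno K hK (lt_top_iff_ne_top.mpr h)
  have hst : stabilizer G ((1 : G) : G ⧸ H) = H := MulAction.stabilizer_quotient H
  have key : ∀ (t a b : G), t • (a : G ⧸ H) = (b : G ⧸ H) ↔ b⁻¹ * t * a ∈ H := by
    intro t a b
    rw [MulAction.Quotient.smul_coe, eq_comm, QuotientGroup.eq, smul_eq_mul, mul_assoc]
  have ex : ∀ a b : G, ∃! t, t ∈ T ∧ t • (a : G ⧸ H) = (b : G ⧸ H) := by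
    intro a b
    have h := hLF.2 b⁻¹ (b * a⁻¹)
    refine (existsUnique_congr (fun t => and_congr_right (fun _ => ?_))).mp h
    rw [key, ← inv_mem_iff]
    have e : (b⁻¹ * (b * a⁻¹ * t⁻¹) * b⁻¹⁻¹)⁻¹ = b⁻¹ * t * a := by group
    rw [e]
  have hnt : Nontrivial (G ⧸ H) := by
    rw [← Finite.one_lt_card_iff_nontrivial]
    have h1 : H.index ≠ 1 := fun h => hne (Subgroup.index_eq_one.mp h)
    have h2 : H.index ≠ 0 := Subgroup.index_ne_zero_of_finite
    change 1 < H.index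
    omega
  have hprim : IsPreprimitive G (G ⧸ H) := by
    rw [← isCoatom_stabilizer_iff_preprimitive G ((1 : G) : G ⧸ H), hst]
    exact hco
  have hff : FaithfulSMul G (G ⧸ H) := by
    refine ⟨fun {x y} h => ?_⟩
    have : x⁻¹ * y = 1 := by
      apply hFaith
      intro g
      have h1 := h ((g⁻¹ : G) : G ⧸ H)
      have h2 : (x⁻¹ * y) • ((g⁻¹ : G) : G ⧸ H) = ((g⁻¹ : G) : G ⧸ H) := by
        rw [mul_smul, ← h1, inv_smul_smul]
      rw [key] at h2
      simpa [mul_assoc] using h2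
    rw [inv_mul_eq_one] at this
    exact this
  have hcT : T.ncard = p * q := by rw [← Nat.card_coe_set_eq]; exact hord
  have : Fact p.Prime := ⟨hp⟩
  have ctx : PQCtx G (G ⧸ H) T p q :=
    { hp := hp, hq := hq, hlt := hlt, one := hLF.1
      conj := fun t ht g => by simpa using hRCC t ht g⁻¹
      ex := fun a b => by
        induction a using QuotientGroup.induction_on with | _ a
        induction b using QuotientGroup.induction_on with | _ b
        exact (ex a b).exists
      uniq := fun s hs t ht a h => by
        induction a using QuotientGroup.induction_on with | _ a
        exact (ex a (t * a)).unique ⟨hs, h⟩ ⟨ht, rfl⟩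
      card := by
        rw [← hord]
        symm
        apply Nat.card_congr
        refine Equiv.ofBijective (fun t : T => (t : G) • ((1 : G) : G ⧸ H)) ⟨?_, ?_⟩
        · intro s t h
          apply Subtype.ext
          exact (ex 1 (t.1 * 1)).unique ⟨s.2, h⟩ ⟨t.2, rfl⟩
        · intro b
          induction b using QuotientGroup.induction_on with | _ b
          obtain ⟨t, ht, h⟩ := (ex 1 b).exists
          exact ⟨⟨t, ht⟩, h⟩
      cardT := hcT
      gen := hgen }
  exact ctx.false

theorem stmt_0 {G : Type*} [Group G] [Finite G] (p q : ℕ) (hp : p.Prime) (hq : q.Prime)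
    (hpq : p ≠ q) (H : Subgroup G) (T : Set G)
    (hLF : IsLoopFolder H T) (hRCC : IsRCC T) (hFaith : IsFaithfulFolder H)
    (hord : Nat.card T = p * q) (hgen : Subgroup.closure T = ⊤) :
    ∃ K : Subgroup G, H < K ∧ K < ⊤ := by
  rcases Nat.lt_or_gt_of_ne hpq with h | h
  · exact stmt_aux q p hq hp h H T hLF hRCC hFaith (by rw [hord, mul_comm]) hgen
  · exact stmt_aux p q hp hq h H T hLF hRCC hFaith hord hgen
end

section
/- (Drápal's theorem.) Let p be a prime and let (G, H, T) be a faithful RCC loop folder of order p with ⟨T⟩ = G (i.e., the envelope of an RCC loop of order p). Then H is the trivial subgroup; consequently T = G and G is a group of order p, so every RCC loop of prime order is a group. -/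
/-- Drápal's theorem: if `(G, H, T)` is the envelope of an RCC loop of prime order `p`,
then `H` is trivial; consequently `T = G` and `G` has order `p`. -/
theorem stmt_1 {G : Type*} [Group G] [Finite G] (p : ℕ) (hp : p.Prime)
    (H : Subgroup G) (T : Set G)
    (hLF : IsLoopFolder H T) (hRCC : IsRCC T) (hFaith : IsFaithfulFolder H)
    (hord : Nat.card T = p) (hgen : Subgroup.closure T = ⊤) :
    H = ⊥ ∧ T = Set.univ ∧ Nat.card G = p := by
  classical
  obtain ⟨h1T, hT⟩ := hLF
  haveI : Fact p.Prime := ⟨hp⟩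
  have hcompl : Subgroup.IsComplement (H : Set G) T := by
    rw [Subgroup.isComplement_iff_existsUnique_mul_inv_mem]
    intro x
    obtain ⟨t, ⟨ht, hx⟩, hu⟩ := hT 1 x
    refine ⟨⟨t, ht⟩, by simpa using hx, ?_⟩
    rintro ⟨s, hs⟩ hsx
    exact Subtype.ext (hu s ⟨hs, by simpa using hsx⟩)
  have hcard : Nat.card H * p = Nat.card G := by
    rw [← hord]; exact hcompl.card_mul_card
  obtain ⟨z, hz⟩ := exists_prime_orderOf_dvd_card' (G := G) p ⟨Nat.card H, by rw [← hcard, mul_comm]⟩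
  have hcomm : ∀ t ∈ T, t * z = z * t := by
    letI : Fintype T := Fintype.ofFinite T
    let f : Function.End T := fun t => ⟨z⁻¹ * t.1 * z, hRCC t.1 t.2 z⟩
    have hpow : ∀ (k : ℕ) (t : T), ((f ^ k) t).1 = (z ^ k)⁻¹ * t.1 * z ^ k := by
      intro k
      induction k with
      | zero => intro t; simp; rfl
      | succ k ih =>
        intro t
        have h2 : (f ^ (k + 1)) t = (f ^ k) (f t) := by rw [pow_succ]; rfl
        rw [h2, ih]
        change (z ^ k)⁻¹ * (z⁻¹ * t.1 * z) * z ^ k = _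
        rw [pow_succ']
        group
    have hf : f ^ p ^ 1 = 1 := by
      funext t
      apply Subtype.ext
      rw [pow_one, hpow, ← hz, pow_orderOf_eq_one]
      simp; rfl
    have hmod := Equiv.Perm.card_fixedPoints_modEq hf
    have hTp : Fintype.card T = p := by rw [← Nat.card_eq_fintype_card, hord]
    have h1f : (⟨1, h1T⟩ : T) ∈ Function.fixedPoints f := by
      apply Subtype.ext
      simp [f]
    have hpos : 0 < Fintype.card (Function.fixedPoints f) := Fintype.card_pos_iff.mpr ⟨⟨_, h1f⟩⟩
    have hdvd : p ∣ Fintype.card (Function.fixedPoints f) := by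
      rw [hTp] at hmod
      exact (Nat.modEq_zero_iff_dvd.mp (hmod.symm.trans (by simp [Nat.ModEq])))
    have hle := Nat.le_of_dvd hpos hdvd
    have huniv : Function.fixedPoints f = Set.univ := by
      rw [← Set.toFinset_inj, Set.toFinset_univ, ← Finset.card_eq_iff_eq_univ, Set.toFinset_card]
      apply le_antisymm
      · exact set_fintype_card_le_univ _
      · omega
    intro t ht
    have h3 : (⟨t, ht⟩ : T) ∈ Function.fixedPoints f := by rw [huniv]; trivial
    have h4 : z⁻¹ * t * z = t := congrArg Subtype.val h3
    calc t * z = z * (z⁻¹ * t * z) := by group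
      _ = z * t := by rw [h4]
  have hcen : ∀ g : G, g * z = z * g := by
    have : (⊤ : Subgroup G) ≤ Subgroup.centralizer {z} := by
      rw [← hgen, Subgroup.closure_le]
      intro t ht
      rw [SetLike.mem_coe, Subgroup.mem_centralizer_singleton_iff]
      exact hcomm t ht
    intro g
    exact Subgroup.mem_centralizer_singleton_iff.mp (this trivial)
  have hcenk : ∀ x ∈ Subgroup.zpowers z, ∀ g : G, Commute g x := by
    rintro x ⟨k, rfl⟩ g
    exact (show Commute g z from hcen g).zpow_right k
  have hdisj : Disjoint H (Subgroup.zpowers z) := by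
    rw [Subgroup.disjoint_def]
    intro x hxH hxz
    apply hFaith
    intro g
    rw [(hcenk x hxz g).eq]
    simpa using hxH
  have hc2 : Subgroup.IsComplement' H (Subgroup.zpowers z) :=
    Subgroup.isComplement'_of_card_mul_and_disjoint (by rw [Nat.card_zpowers, hz, hcard]) hdisj
  have hbot : H = ⊥ := by
    rw [Subgroup.eq_bot_iff_forall]
    intro h hh
    apply hFaith
    intro g
    obtain ⟨⟨⟨a, ha⟩, ⟨b, hb⟩⟩, hab⟩ := hc2.surjective g
    simp only at hab
    have e : g * h * g⁻¹ = a * h * a⁻¹ := by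
      rw [← hab, mul_assoc a b h, ← (hcenk b hb h).eq]
      group
    rw [e]
    exact H.mul_mem (H.mul_mem ha hh) (H.inv_mem ha)
  have hG : Nat.card G = p := by
    rw [← hcard, hbot]; simp
  refine ⟨hbot, ?_, hG⟩
  subst hbot
  ext x
  simp only [Set.mem_univ, iff_true]
  obtain ⟨t, ⟨ht, hx⟩, -⟩ := hT 1 x
  have : x = t := by simpa [mul_inv_eq_one] using hx
  rwa [this]
end

section
/- Let p be a prime and let (G, H, T) be an RCC loop folder of order p (not assumed faithful) such that ⟨T⟩ = G. Then G is abelian. -/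
/-- An RCC loop folder of prime order `p` (not assumed faithful) with `⟨T⟩ = G` has
abelian `G`. -/
theorem stmt_2 {G : Type*} [Group G] [Finite G] (p : ℕ) (hp : p.Prime)
    (H : Subgroup G) (T : Set G)
    (hLF : IsLoopFolder H T) (hRCC : IsRCC T)
    (hord : Nat.card T = p) (hgen : Subgroup.closure T = ⊤) :
    ∀ a b : G, a * b = b * a := by
  classical
  haveI : Fact p.Prime := ⟨hp⟩
  haveI : Fintype T := Fintype.ofFinite T
  have hcomp : Subgroup.IsComplement (H : Set G) T := by
    rw [Subgroup.isComplement_iff_existsUnique_mul_inv_mem]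
    intro x
    obtain ⟨t, ⟨ht, h1⟩, h2⟩ := hLF.2 1 x
    refine ⟨⟨t, ht⟩, by simpa using h1, ?_⟩
    rintro ⟨s, hs⟩ h
    exact Subtype.ext (h2 s ⟨hs, by simpa using h⟩)
  have hidx : H.index = p := by rw [← hord]; exact hcomp.card_right.symm
  -- elements commuting with `T` are central
  have hcent : ∀ g : G, (∀ t ∈ T, g * t = t * g) → g ∈ Subgroup.center G := by
    intro g hg
    have : Subgroup.closure T ≤ Subgroup.centralizer {g} := by
      rw [Subgroup.closure_le]
      intro t ht
      rw [SetLike.mem_coe, Subgroup.mem_centralizer_singleton_iff]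
      first | exact (hg t ht).symm | exact hg t ht
    rw [Subgroup.mem_center_iff]
    intro x
    have hx : x ∈ Subgroup.centralizer {g} := this (hgen ▸ Subgroup.mem_top x)
    rw [Subgroup.mem_centralizer_singleton_iff] at hx
    first | exact hx | exact hx.symm
  -- elements of `p`-power order are central
  have hpel : ∀ g : G, ∀ n : ℕ, g ^ p ^ n = 1 → g ∈ Subgroup.center G := by
    intro g n hgn
    apply hcent
    let σ : Equiv.Perm T :=
      { toFun := fun t => ⟨g * t * g⁻¹, by simpa using hRCC t t.2 g⁻¹⟩
        invFun := fun t => ⟨g⁻¹ * t * g, hRCC t t.2 g⟩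
        left_inv := fun t => Subtype.ext (by simp [mul_assoc])
        right_inv := fun t => Subtype.ext (by simp [mul_assoc]) }
    have hpow : ∀ (m : ℕ) (t : T), (((σ ^ m) t : T) : G) = g ^ m * t * (g ^ m)⁻¹ := by
      intro m
      induction m with
      | zero => intro t; simp
      | succ k ih =>
        intro t
        rw [pow_succ, Equiv.Perm.mul_apply, ih]
        simp [σ, pow_succ, mul_assoc]
    have hσ : σ ^ p ^ n = 1 := by
      ext t
      rw [hpow, hgn]; simp
    have hmod := Equiv.Perm.card_fixedPoints_modEq (p := p) (n := n) (f := ⇑σ) (by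
      have h := congrArg (MulAction.toEndHom (M := Equiv.Perm T) (α := T)) hσ
      rw [map_pow, map_one] at h
      exact h)
    have hcT : Fintype.card T = p := by rw [← Nat.card_eq_fintype_card, hord]
    have h1 : (⟨1, hLF.1⟩ : T) ∈ Function.fixedPoints σ := by
      apply Subtype.ext; simp [σ]
    have hdvd : p ∣ Fintype.card (Function.fixedPoints σ) := by
      have := (Nat.modEq_zero_iff_dvd.1 (hmod.symm.trans (by
        rw [hcT]; exact (Nat.modEq_zero_iff_dvd.2 dvd_rfl))))
      convert this
    have hpos : 0 < Fintype.card (Function.fixedPoints σ) := Fintype.card_pos_iff.2 ⟨⟨_, h1⟩⟩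
    have hle := Nat.le_of_dvd hpos hdvd
    have huniv : Function.fixedPoints σ = Set.univ := by
      apply Set.eq_of_subset_of_card_le (Set.subset_univ _)
      simpa [hcT] using hle
    intro t ht
    have : (⟨t, ht⟩ : T) ∈ Function.fixedPoints σ := huniv ▸ Set.mem_univ _
    have h3 : g * t * g⁻¹ = t := congrArg Subtype.val this
    exact mul_inv_eq_iff_eq_mul.1 h3
  -- some element of `p`-power order lies outside `H`
  obtain ⟨z, hzc, hzH⟩ : ∃ z ∈ Subgroup.center G, z ∉ H := by
    by_contra! hcon
    let P : Sylow p G := default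
    have hPH : (P : Subgroup G) ≤ H := by
      intro x hx
      obtain ⟨n, hn⟩ := P.isPGroup' ⟨x, hx⟩
      exact hcon x (hpel x n (by simpa using congrArg Subtype.val hn))
    have := Subgroup.index_dvd_of_le hPH
    rw [hidx] at this
    exact P.not_dvd_index this
  have hnorm : H.Normal := by
    rw [← Subgroup.normalizer_eq_top_iff]
    have hd := Subgroup.relIndex_mul_index (Subgroup.le_normalizer (H := H))
    rw [hidx] at hd
    have hd' : (Subgroup.normalizer (H : Set G)).index ∣ p := ⟨_, by rw [mul_comm]; exact hd.symm⟩
    rcases (Nat.dvd_prime hp).1 hd' with h | h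
    · exact Subgroup.index_eq_one.1 h
    · exfalso
      rw [h] at hd
      have h1 : H.relIndex (Subgroup.normalizer (H : Set G)) = 1 :=
        Nat.eq_of_mul_eq_mul_right hp.pos (by rw [hd, one_mul])
      rw [Subgroup.relIndex_eq_one] at h1
      apply hzH
      apply h1
      rw [Subgroup.mem_normalizer_iff]
      intro x
      rw [← Subgroup.mem_center_iff.1 hzc x]
      simp
  have hcyc : IsCyclic (G ⧸ H) := isCyclic_of_prime_card (p := p) (by
    rw [← hidx]; rfl)
  have hcommQ : ∀ a b : G ⧸ H, a * b = b * a := fun a b =>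
    (IsCyclic.isMulCommutative (α := G ⧸ H)).is_comm.comm a b
  have hT : ∀ t ∈ T, t ∈ Subgroup.center G := by
    intro t ht
    rw [Subgroup.mem_center_iff]
    intro g
    obtain ⟨s, _, hs⟩ := hLF.2 1 t
    have e1 := hs t ⟨ht, by simp⟩
    have e2 := hs (g⁻¹ * t * g) ⟨hRCC t ht g, by
      rw [← QuotientGroup.eq_one_iff]
      simp only [QuotientGroup.mk_mul, QuotientGroup.mk_inv, QuotientGroup.mk_one]
      rw [hcommQ (((g : G ⧸ H))⁻¹ * t) g]
      simp⟩
    have e3 : g⁻¹ * t * g = t := e2.trans e1.symm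
    rw [mul_assoc, inv_mul_eq_iff_eq_mul] at e3
    exact e3.symm
  have htop : (⊤ : Subgroup G) ≤ Subgroup.center G := by
    rw [← hgen, Subgroup.closure_le]; exact hT
  intro a b
  exact Subgroup.mem_center_iff.1 (htop (Subgroup.mem_top b)) a
end

section
/- (Main theorem.) Let p be an odd prime and let (G, H, T) be a faithful RCC loop folder of order 2p with ⟨T⟩ = G (the envelope of an RCC loop of order 2p). Then there is a subgroup K of G with H ≤ K and |G : K| = 2 such that one of the following three mutually exclusive cases occurs: (a) G is isomorphic to the wreath product C_p ≀ C_2; (b) there is an injective group homomorphism from G into the affine group Aff(1, p); (c) there is an element a ∈ G of order 2 such that G is the internal direct product of K and ⟨a⟩ (both normal, trivial intersection, K⟨a⟩ = G), K has odd order, and there is an injective group homomorphism from K into Aff(1, p). Moreover, in cases (b) and (c) the subgroup ⟨T ∩ K⟩ is a normal subgroup of G of order p. -/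
/-- The base group `C_p × C_p` of the wreath product, written multiplicatively. -/
abbrev CpCp (p : ℕ) := Multiplicative (ZMod p) × Multiplicative (ZMod p)

/-- The factor-swapping automorphism of `C_p × C_p`. -/
def swapAut (p : ℕ) : MulAut (CpCp p) := (MulEquiv.prodComm : CpCp p ≃* CpCp p)

/-- The action of `C_2` on `C_p × C_p` in which the nontrivial element swaps the factors. -/
def wreathAction (p : ℕ) : Multiplicative (ZMod 2) →* MulAut (CpCp p) where
  toFun x := if Multiplicative.toAdd x = 0 then 1 else swapAut p
  map_one' := by simp
  map_mul' a b := by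
    have h2 : ∀ x : ZMod 2, x = 0 ∨ x = 1 := by decide
    have hswap : swapAut p * swapAut p = 1 := by
      ext x : 1
      simp [swapAut]
    have h11 : (1 : ZMod 2) + 1 = 0 := by decide
    have h10 : (1 : ZMod 2) ≠ 0 := by decide
    rcases h2 (Multiplicative.toAdd a) with ha | ha <;>
      rcases h2 (Multiplicative.toAdd b) with hb | hb <;>
      simp [toAdd_mul, ha, hb, h11, h10, hswap]

/-- The wreath product `C_p ≀ C_2 = (C_p × C_p) ⋊ C_2`, where the nontrivial element of
`C_2` swaps the two factors. -/
abbrev WreathCpC2 (p : ℕ) := SemidirectProduct (CpCp p) (Multiplicative (ZMod 2)) (wreathAction p)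

/-- The affine group `Aff(1, p)` of invertible affine transformations `x ↦ ax + b` of the
line over `ℤ/pℤ`. -/
abbrev Aff1 (p : ℕ) := ZMod p ≃ᵃ[ZMod p] ZMod p


lemma aff_apply {p : ℕ} (f : Aff1 p) (x : ZMod p) : f x = (f 1 - f 0) * x + f 0 := by
  have h : ∀ y : ZMod p, f y = f.linear y + f 0 := by
    intro y
    have := f.map_vadd 0 y
    simpa using this
  have h2 : f.linear x = x * f.linear 1 := by
    have := f.linear.map_smul x (1 : ZMod p)
    simpa using this
  rw [h x, h 1, h2]; ring

lemma aff_inj {p : ℕ} : Function.Injective (fun f : Aff1 p => (f 0, f 1)) := by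
  intro f g h
  simp only [Prod.mk.injEq] at h
  ext x
  rw [aff_apply f, aff_apply g, h.1, h.2]

lemma aff_card {p : ℕ} [Fact p.Prime] {G : Type*} [Group G] [Finite G]
    (f : G →* Aff1 p) (hf : Function.Injective f) : Nat.card G < p ^ 2 := by
  have hinj : Function.Injective (fun g : G => ((f g) 0, (f g) 1)) :=
    fun a b h => hf (aff_inj h)
  have hle := Nat.card_le_card_of_injective _ hinj
  have hc : Nat.card (ZMod p × ZMod p) = p ^ 2 := by
    rw [Nat.card_prod, Nat.card_zmod]; ring
  rcases lt_or_eq_of_le hle with h | h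
  · rwa [hc] at h
  · exfalso
    have hb := hinj.bijective_of_nat_card_le h.ge
    obtain ⟨g, hg⟩ := hb.2 (0, 0)
    simp only [Prod.mk.injEq] at hg
    have := (f g).injective (hg.1.trans hg.2.symm)
    exact zero_ne_one this

lemma aff_comm {p : ℕ} (hp : p.Prime) (hodd : Odd p) (g a : Aff1 p) (hg : g ^ p = 1)
    (hg1 : g ≠ 1) (ha : a ^ 2 = 1) (hc : g * a = a * g) : a = 1 := by
  have := Fact.mk hp
  set u := g 1 - g 0 with hu
  set v := g 0 with hv
  set r := a 1 - a 0 with hr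
  set s := a 0 with hs
  have Hg : ∀ x, g x = u * x + v := aff_apply g
  have Ha : ∀ x, a x = r * x + s := aff_apply a
  have hpow : ∀ n : ℕ, ∀ x y, (g ^ n) x - (g ^ n) y = u ^ n * (x - y) := by
    intro n
    induction n with
    | zero => intro x y; simp
    | succ k ih =>
      intro x y
      rw [pow_succ, AffineEquiv.mul_def, AffineEquiv.trans_apply, AffineEquiv.trans_apply, ih,
        Hg, Hg]
      ring
  have hu1 : u = 1 := by
    have := hpow p 1 0
    rw [hg, ZMod.pow_card] at this
    simpa using this.symm
  have hv0 : v ≠ 0 := by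
    intro h
    apply hg1
    ext x
    rw [Hg, hu1, h]; simp
  have hc' : ∀ x, g (a x) = a (g x) := by
    intro x
    have := congrArg (fun f : Aff1 p => f x) hc
    simpa [AffineEquiv.mul_def] using this
  have hr1 : r = 1 := by
    have h0 := hc' 0
    rw [Hg, Ha, Ha, Hg, hu1] at h0
    have : (r - 1) * v = 0 := by linear_combination -h0
    rcases mul_eq_zero.1 this with h | h
    · linear_combination h
    · exact absurd h hv0
  have hs0 : s = 0 := by
    have h0 : (a * a) 0 = (0 : ZMod p) := by rw [← sq, ha]; rfl
    rw [AffineEquiv.mul_def, AffineEquiv.trans_apply, Ha, Ha, hr1] at h0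
    have h2 : (2 : ZMod p) * s = 0 := by linear_combination h0
    rcases mul_eq_zero.1 h2 with h | h
    · exfalso
      have : ((2 : ℕ) : ZMod p) = 0 := by exact_mod_cast h
      rw [ZMod.natCast_eq_zero_iff] at this
      have := (Nat.prime_dvd_prime_iff_eq hp Nat.prime_two).1 this
      subst this
      exact absurd hodd (by decide)
    · exact h
  ext x
  rw [Ha, hr1, hs0]; simp

/-- embedding into the affine group -/
lemma aff_embed {p : ℕ} [Fact p.Prime] {G : Type*} [Group G] [Finite G] (P : Subgroup G)
    [hN : P.Normal] (hP : Nat.card P = p) (hcop : (Nat.card P).Coprime P.index)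
    (hC : ∀ g : G, (∀ x ∈ P, g * x = x * g) → g ∈ P) :
    ∃ f : G →* Aff1 p, Function.Injective f := by
  obtain ⟨Q, hQ⟩ := Subgroup.exists_right_complement'_of_coprime hcop
  have e : Multiplicative (ZMod p) ≃* P :=
    mulEquivOfPrimeCardEq (p := p) (by simp) hP
  let E : ZMod p → G := fun x => (e (Multiplicative.ofAdd x) : G)
  have hEadd : ∀ x y, E (x + y) = E x * E y := by
    intro x y; simp [E, ofAdd_add]
  have hEinj : Function.Injective E := by
    intro x y h
    have : e (Multiplicative.ofAdd x) = e (Multiplicative.ofAdd y) := Subtype.ext h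
    simpa using this
  have hEmem : ∀ x, E x ∈ P := fun x => (e _).2
  have hEsurj : ∀ y ∈ P, ∃ x, E x = y := by
    intro y hy
    refine ⟨Multiplicative.toAdd (e.symm ⟨y, hy⟩), ?_⟩
    simp [E]
  have hL : ∀ g : G, ∀ x, ∃ y, E y = g * E x * g⁻¹ := fun g x =>
    hEsurj _ (hN.conj_mem _ (hEmem x) g)
  choose L hL using hL
  have hc : ∀ g : G, ∃ c, (E c)⁻¹ * g ∈ Q := by
    intro g
    obtain ⟨⟨a, b⟩, hab⟩ := hQ.2 g
    obtain ⟨c, hc⟩ := hEsurj a a.2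
    refine ⟨c, ?_⟩
    have : (E c)⁻¹ * g = b := by rw [hc, ← hab]; simp
    rw [this]; exact b.2
  choose c hc using hc
  have huniq : ∀ x y, (E x)⁻¹ * E y ∈ Q → x = y := by
    intro x y h
    have hd := hQ.disjoint
    have := (Subgroup.disjoint_def.1 hd) (mul_mem (inv_mem (hEmem x)) (hEmem y)) h
    exact hEinj (by rwa [inv_mul_eq_one] at this)
  have hLadd : ∀ g x y, L g (x + y) = L g x + L g y := by
    intro g x y
    apply hEinj
    rw [hL, hEadd, hEadd, hL, hL]; group
  have hPcomm : ∀ x y, E x * E y = E y * E x := by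
    intro x y; rw [← hEadd, ← hEadd, add_comm]
  have hLmul : ∀ g g' x, L (g * g') x = L g (L g' x) := by
    intro g g' x
    apply hEinj
    rw [hL, hL, hL]; group
  have hcmul : ∀ g g', c (g * g') = c g + L g (c g') := by
    intro g g'
    apply huniq
    have h1 : ((E (c g))⁻¹ * g) * ((E (c g'))⁻¹ * g') ∈ Q := mul_mem (hc g) (hc g')
    have h2 : (E (c (g * g')))⁻¹ * (g * g') ∈ Q := hc _
    have h3 := mul_mem h2 (inv_mem h1)
    have : (E (c (g * g')))⁻¹ * E (c g + L g (c g')) = (E (c (g * g')))⁻¹ * (g * g') *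
        ((E (c g))⁻¹ * g * ((E (c g'))⁻¹ * g'))⁻¹ := by
      rw [add_comm, hEadd, hL]; group
    rw [this]; exact h3
  let LL : G → (ZMod p →ₗ[ZMod p] ZMod p) := fun g =>
    AddMonoidHom.toZModLinearMap p (AddMonoidHom.mk' (L g) (hLadd g))
  have hLL : ∀ g x, LL g x = L g x := fun g x => rfl
  let A : G → (ZMod p →ᵃ[ZMod p] ZMod p) := fun g =>
    { toFun := fun x => L g x + c g
      linear := LL g
      map_vadd' := by
        intro x v
        simp only [vadd_eq_add, hLL, hLadd]; ring }
  have hA : ∀ g x, A g x = L g x + c g := fun g x => rfl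
  have hL1 : ∀ x, L 1 x = x := by intro x; apply hEinj; rw [hL]; simp
  have hE0 : E 0 = 1 := by simp [E]
  have hc1 : c 1 = 0 := by
    apply huniq; rw [hE0]; exact hc 1
  let φ : G →* (ZMod p →ᵃ[ZMod p] ZMod p) :=
    { toFun := A
      map_one' := by ext x; rw [hA, hL1, hc1]; simp
      map_mul' := by
        intro g g'
        ext x
        rw [AffineMap.coe_mul, Function.comp_apply, hA, hA, hA, hcmul, hLmul, hLadd]; ring }
  refine ⟨(AffineEquiv.equivUnitsAffineMap.symm.toMonoidHom).comp φ.toHomUnits, ?_⟩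
  rw [MonoidHom.coe_comp]
  refine Function.Injective.comp AffineEquiv.equivUnitsAffineMap.symm.injective ?_
  have hφ : Function.Injective φ := by
    rw [injective_iff_map_eq_one]
    intro g hg
    have h1 : ∀ x, L g x + c g = x := by
      intro x
      have := congrArg (fun f : ZMod p →ᵃ[ZMod p] ZMod p => f x) hg
      exact this
    have hL0 : L g 0 = 0 := by
      have := hLadd g 0 0
      rw [add_zero] at this
      simpa using this
    have hcg : c g = 0 := by have := h1 0; rwa [hL0, zero_add] at this
    have hgP : g ∈ P := by
      apply hC
      intro y hy
      obtain ⟨x, rfl⟩ := hEsurj y hy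
      have := h1 x
      rw [hcg, add_zero] at this
      have h2 := hL g x
      rw [this] at h2
      rw [eq_mul_inv_iff_mul_eq] at h2
      exact h2.symm
    have hgQ : g ∈ Q := by
      have := hc g
      rw [hcg, hE0] at this; simpa using this
    exact (Subgroup.disjoint_def.1 hQ.disjoint) hgP hgQ
  intro g g' h
  apply hφ
  have := congrArg Units.val h
  simpa using this

lemma wreath_iso {p : ℕ} [Fact p.Prime] (hodd : Odd p) {G : Type*} [Group G] [Finite G]
    (H : Subgroup G) (hH : Nat.card H = p) (τ : G) (hτ : orderOf τ = 2)
    (hcomm : ∀ x ∈ H, ∀ y ∈ H, x * (τ * y * τ⁻¹) = (τ * y * τ⁻¹) * x)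
    (hdis : ∀ x ∈ H, τ * x * τ⁻¹ ∈ H → x = 1) (hG : Nat.card G = 2 * p ^ 2) :
    Nonempty (G ≃* WreathCpC2 p) := by
  have e : Multiplicative (ZMod p) ≃* H := mulEquivOfPrimeCardEq (p := p) (by simp) hH
  have hz : Nat.card (Subgroup.zpowers τ) = 2 := by rw [Nat.card_zpowers, hτ]
  have e2 : Multiplicative (ZMod 2) ≃* Subgroup.zpowers τ :=
    mulEquivOfPrimeCardEq (p := 2) (by simp) hz
  have hτ2 : τ * τ = 1 := by rw [← sq, ← hτ]; exact pow_orderOf_eq_one τ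
  have hτ1 : τ ≠ 1 := by rintro rfl; simp at hτ
  have hτi : τ⁻¹ = τ := inv_eq_of_mul_eq_one_left hτ2
  let f : Multiplicative (ZMod p) →* G := H.subtype.comp e.toMonoidHom
  let f' : Multiplicative (ZMod p) →* G := (MulAut.conj τ).toMonoidHom.comp f
  have hfm : ∀ x, f x ∈ H := fun x => (e x).2
  have hf' : ∀ x, f' x = τ * f x * τ⁻¹ := fun x => rfl
  have hfinj : Function.Injective f := by
    intro x y h
    exact e.injective (Subtype.ext h)
  let fn : CpCp p →* G := MonoidHom.noncommCoprod f f' (fun a b => hcomm _ (hfm a) _ (hfm b))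
  have hfn : ∀ x, fn x = f x.1 * f' x.2 := fun x => rfl
  let fg : Multiplicative (ZMod 2) →* G := (Subgroup.zpowers τ).subtype.comp e2.toMonoidHom
  have hfginj : Function.Injective fg := by
    intro x y h
    exact e2.injective (Subtype.ext h)
  have hfg : ∀ x, Multiplicative.toAdd x ≠ 0 → fg x = τ := by
    intro x hx
    have hm : fg x ∈ Subgroup.zpowers τ := (e2 x).2
    have hne : fg x ≠ 1 := by
      intro h
      apply hx
      have := hfginj (h.trans (map_one fg).symm)
      rw [this]; rfl
    obtain ⟨k, hk⟩ := Subgroup.mem_zpowers_iff.1 hm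
    rcases Int.even_or_odd' k with ⟨m, rfl | rfl⟩
    · exfalso; apply hne; rw [← hk, zpow_mul]; 
      have : τ ^ (2:ℤ) = 1 := by rw [zpow_two, hτ2]
      rw [this, one_zpow]
    · rw [← hk, zpow_add, zpow_mul]
      have : τ ^ (2:ℤ) = 1 := by rw [zpow_two, hτ2]
      rw [this, one_zpow, one_mul, zpow_one]
  let F : WreathCpC2 p →* G := SemidirectProduct.lift fn fg (by
    intro g
    ext x
    by_cases h : Multiplicative.toAdd g = 0
    · have : g = 1 := h
      subst this
      simp
    · have h2 : wreathAction p g = swapAut p := if_neg h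
      have h3 : (fn.comp (MulEquiv.toMonoidHom (wreathAction p g))) x
          = f x.2 * (τ * f x.1 * τ⁻¹) := by
        rw [h2]; rfl
      have h4 : ((MulEquiv.toMonoidHom (MulAut.conj (fg g))).comp fn) x
          = τ * (f x.1 * (τ * f x.2 * τ⁻¹)) * τ⁻¹ := by
        rw [hfg g h]; rfl
      rw [h3, h4, hcomm _ (hfm _) _ (hfm _), hτi]
      simp only [mul_assoc, hτ2, mul_one])
  have hF : ∀ x, F x = f x.left.1 * (τ * f x.left.2 * τ⁻¹) * fg x.right := fun x => rfl
  have hFinj : Function.Injective F := by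
    rw [injective_iff_map_eq_one]
    intro x hx
    rw [hF] at hx
    by_cases h : Multiplicative.toAdd x.right = 0
    · have hr : x.right = 1 := h
      rw [hr, map_one, mul_one] at hx
      have h1 : τ * f x.left.2 * τ⁻¹ ∈ H := by
        rw [eq_inv_of_mul_eq_one_right hx]; exact inv_mem (hfm _)
      have h2 := hdis _ (hfm _) h1
      rw [h2] at hx
      have h3 : f x.left.1 = 1 := by simpa using hx
      have h4 := hfinj (h2.trans (map_one f).symm)
      have h5 := hfinj (h3.trans (map_one f).symm)
      ext
      · rw [h5]; rfl
      · rw [h4]; rfl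
      · rw [hr]; rfl
    · exfalso
      rw [hfg _ h] at hx
      apply hτ1
      have hpw : ∀ y, f y ^ p = 1 := by
        intro y
        have : y ^ p = 1 := by
          have := pow_card_eq_one' (x := y)
          simpa using this
        rw [← map_pow, this, map_one]
      have h1 : (f x.left.1 * (τ * f x.left.2 * τ⁻¹)) ^ p = 1 := by
        have hcm : Commute (f x.left.1) (τ * f x.left.2 * τ⁻¹) := hcomm _ (hfm _) _ (hfm _)
        rw [hcm.mul_pow, hpw, conj_pow, hpw]; simp
      rw [eq_inv_of_mul_eq_one_left hx, hτi] at h1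
      obtain ⟨m, hm⟩ := hodd
      rw [hm, pow_succ, pow_mul, sq, hτ2, one_pow, one_mul] at h1
      exact h1
  have hbij := hFinj.bijective_of_nat_card_le (by
    rw [hG, SemidirectProduct.card, Nat.card_prod]
    simp; apply le_of_eq; ring)
  exact ⟨(MulEquiv.ofBijective F hbij).symm⟩

section counting
variable {G : Type*} [Group G] [Finite G]

lemma card_sup' (H N : Subgroup G) [N.Normal] (h : ∀ x ∈ N, x ∈ H → x = 1) :
    Nat.card (H ⊔ N : Subgroup G) = Nat.card H * Nat.card N := by
  have h1 := Subgroup.relIndex_sup_right H N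
  have h2 : N ⊓ H = ⊥ := by
    rw [eq_bot_iff]
    intro x hx
    exact h x hx.1 hx.2
  have h3 : N.relIndex H = Nat.card H := by
    rw [← Subgroup.inf_relIndex_right N H, h2, Subgroup.relIndex_bot_left]
  have := Subgroup.relIndex_mul_relIndex ⊥ N (H ⊔ N) bot_le le_sup_right
  rw [Subgroup.relIndex_bot_left, Subgroup.relIndex_bot_left, h1, h3] at this
  rw [← this, mul_comm]

lemma card_trans (H K : Subgroup G) (T : Set G) (hT : ∀ x : G, ∃! t, t ∈ T ∧ x * t⁻¹ ∈ H)
    (hK : H ≤ K) : Nat.card K = Nat.card H * (T ∩ (K : Set G)).ncard := by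
  have : Function.Bijective (fun z : H × (T ∩ (K : Set G) : Set G) =>
      (⟨z.1 * z.2, mul_mem (hK z.1.2) z.2.2.2⟩ : K)) := by
    constructor
    · rintro ⟨⟨h, hh⟩, ⟨t, ht⟩⟩ ⟨⟨h', hh'⟩, ⟨t', ht'⟩⟩ heq
      have heq : h * t = h' * t' := congrArg Subtype.val heq
      have : t = t' := (hT (h * t)).unique ⟨ht.1, by simpa using hh⟩
        ⟨ht'.1, by rw [heq]; simpa using hh'⟩
      subst this
      have : h = h' := by simpa using heq
      subst this
      rfl
    · rintro ⟨k, hk⟩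
      obtain ⟨t, ⟨ht, ht'⟩, -⟩ := hT k
      refine ⟨⟨⟨_, ht'⟩, ⟨t, ht, ?_⟩⟩, ?_⟩
      · have := mul_mem (inv_mem (hK ht')) hk
        simpa using this
      · simp
  rw [← Nat.card_eq_of_bijective _ this, Nat.card_prod]; rfl

/-- conjugation action of a subgroup on an invariant set -/
def conjActOn (P : Subgroup G) (A : Set G) (hA : ∀ x ∈ P, ∀ a ∈ A, x * a * x⁻¹ ∈ A) :
    MulAction P A where
  smul x a := ⟨x * a * (x : G)⁻¹, hA x x.2 a a.2⟩
  one_smul a := Subtype.ext (by change (1 : G) * a * (1 : G)⁻¹ = a; simp)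
  mul_smul x y a := Subtype.ext (by
    change ((x : G) * y) * a * ((x : G) * y)⁻¹ = x * (y * a * (y : G)⁻¹) * (x : G)⁻¹
    group)

lemma pfix {p : ℕ} [Fact p.Prime] (P : Subgroup G) (hP : IsPGroup p P) (A : Set G)
    (hA : ∀ x ∈ P, ∀ a ∈ A, x * a * x⁻¹ ∈ A) :
    A.ncard ≡ {a | a ∈ A ∧ ∀ x ∈ P, x * a = a * x}.ncard [MOD p] := by
  let := conjActOn P A hA
  have h := hP.card_modEq_card_fixedPoints A
  have h2 : Nat.card (MulAction.fixedPoints P A) =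
      {a | a ∈ A ∧ ∀ x ∈ P, x * a = a * x}.ncard := by
    refine Nat.card_congr ⟨fun z => ⟨z.1.1, z.1.2, ?_⟩, fun z => ⟨⟨z.1, z.2.1⟩, ?_⟩, ?_, ?_⟩
    · intro x hx
      have := congrArg Subtype.val (z.2 ⟨x, hx⟩)
      have : x * z.1.1 * x⁻¹ = z.1.1 := this
      rwa [mul_inv_eq_iff_eq_mul] at this
    · intro x
      apply Subtype.ext
      change (x : G) * z.1 * (x : G)⁻¹ = z.1
      rw [mul_inv_eq_iff_eq_mul]
      exact z.2.2 x x.2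
    · intro z; rfl
    · intro z; rfl
  rw [← h2]; exact h

lemma orb_card (N : Subgroup G) (s : G) :
    {y | ∃ n ∈ N, y = n * s * n⁻¹}.ncard = (Subgroup.centralizer {s}).relIndex N := by
  let : MulAction N G := MulAction.compHom G (MulAut.conj.comp N.subtype)
  have hs : ∀ (n : N) (g : G), n • g = n * g * (n : G)⁻¹ := fun n g => rfl
  have h := MulAction.index_stabilizer N s
  have h1 : MulAction.orbit N s = {y | ∃ n ∈ N, y = n * s * n⁻¹} := by
    ext y
    constructor
    · rintro ⟨n, rfl⟩
      exact ⟨n, n.2, rfl⟩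
    · rintro ⟨n, hn, rfl⟩
      exact ⟨⟨n, hn⟩, rfl⟩
  have h2 : MulAction.stabilizer N s = (Subgroup.centralizer {s}).subgroupOf N := by
    ext n
    rw [MulAction.mem_stabilizer_iff, hs, Subgroup.mem_subgroupOf, mul_inv_eq_iff_eq_mul,
      Subgroup.mem_centralizer_singleton_iff]
  rw [← h1, ← h, h2]; rfl

/-- a `p`-group acting on a set of `p` elements: orbit of a non-fixed point is everything -/
lemma orb_all {p : ℕ} [Fact p.Prime] (P : Subgroup G) (hP : IsPGroup p P) (A : Set G)
    (hA : ∀ x ∈ P, ∀ a ∈ A, x * a * x⁻¹ ∈ A) (hAc : A.ncard = p) (a : G) (ha : a ∈ A)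
    (hna : ¬ ∀ x ∈ P, x * a = a * x) :
    A = {y | ∃ n ∈ P, y = n * a * n⁻¹} ∧ (Subgroup.centralizer {a}).relIndex P = p := by
  have h1 := orb_card P a
  obtain ⟨n, hn⟩ := hP.index ((Subgroup.centralizer {a}).subgroupOf P)
  have hsub : {y | ∃ n ∈ P, y = n * a * n⁻¹} ⊆ A := by
    rintro y ⟨n, hn, rfl⟩; exact hA n hn a ha
  have hn : (Subgroup.centralizer {a}).relIndex P = p ^ n := hn
  have hn0 : n ≠ 0 := by
    rintro rfl
    rw [pow_zero, Subgroup.relIndex_eq_one] at hn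
    apply hna
    intro x hx
    exact (Subgroup.mem_centralizer_singleton_iff.1 (hn hx))
  have hle := Set.ncard_le_ncard hsub (Set.toFinite A)
  have hpp : p ≤ p ^ n := Nat.le_self_pow hn0 p
  have heq := Set.eq_of_subset_of_ncard_le hsub (by rw [h1, hn, hAc]; exact hpp) (Set.toFinite A)
  exact ⟨heq.symm, by rw [← h1, heq, hAc]⟩

end counting

lemma index_two {G : Type*} [Group G] [Finite G] (K : Subgroup G) (h : Nat.card G = Nat.card K * 2) :
    K.index = 2 := by
  have h1 := K.card_mul_index
  have h2 : 0 < Nat.card K := Nat.card_pos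
  exact Nat.eq_of_mul_eq_mul_left h2 (h1.trans h)

lemma caseA {p : ℕ} [hp : Fact p.Prime] (hodd : Odd p) {G : Type*} [Group G] [Finite G]
    (H : Subgroup G) (hFaith : IsFaithfulFolder H) (Z : Subgroup G)
    (hZ : ∀ z ∈ Z, ∀ g, g * z = z * g) (hZp : Nat.card Z = p)
    (hG : Nat.card G = Nat.card H * (2 * p)) (hpH : p ∣ Nat.card H) :
    ∃ K : Subgroup G, H ≤ K ∧ K.index = 2 ∧ Nonempty (G ≃* WreathCpC2 p) := by
  have hZN : Z.Normal := ⟨fun z hz g => by rw [hZ z hz g]; simpa using hz⟩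
  have hZH : ∀ z ∈ Z, z ∈ H → z = 1 := by
    intro z hz hzH
    apply hFaith
    intro g
    rw [hZ z hz g]; simpa using hzH
  set K := H ⊔ Z with hK
  have hcK : Nat.card K = Nat.card H * p := by rw [hK, card_sup' H Z hZH, hZp]
  have hKi : K.index = 2 := index_two K (by rw [hG, hcK]; ring)
  have hKN : K.Normal := Subgroup.normal_of_index_eq_two hKi
  have hHK : H ≤ K := le_sup_left
  have hdec : ∀ k ∈ K, ∃ h ∈ H, ∃ z ∈ Z, h * z = k := by
    intro k hk
    exact Subgroup.mem_sup_of_normal_right.1 hk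
  have hHn : ∀ k ∈ K, ∀ x ∈ H, k * x * k⁻¹ ∈ H := by
    intro k hk x hx
    obtain ⟨h, hh, z, hz, rfl⟩ := hdec k hk
    have : h * z * x * (h * z)⁻¹ = h * x * h⁻¹ := by
      rw [mul_assoc h z x, ← hZ z hz x]; group
    rw [this]
    exact mul_mem (mul_mem hh hx) (inv_mem hh)
  have htriv : ∀ g, g ∉ K → ∀ x ∈ H, g * x * g⁻¹ ∈ H → x = 1 := by
    intro g hg x hx hgx
    apply hFaith
    intro y
    by_cases hy : y ∈ K
    · exact hHn y hy x hx
    · have hgi : g⁻¹ ∉ K := fun h => hg (by simpa using h)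
      have h1 : y * g⁻¹ ∈ K := (Subgroup.mul_mem_iff_of_index_two hKi).2 (iff_of_false hy hgi)
      have h2 := hHn _ h1 _ hgx
      have : y * g⁻¹ * (g * x * g⁻¹) * (y * g⁻¹)⁻¹ = y * x * y⁻¹ := by group
      rwa [this] at h2
  have hne : ∃ g, g ∉ K := by
    by_contra h
    push Not at h
    have : K = ⊤ := by rw [eq_top_iff]; intro x _; exact h x
    rw [this] at hKi; simp at hKi
  obtain ⟨g, hg⟩ := hne
  have hHp : Nat.card H = p := by
    refine le_antisymm ?_ (Nat.le_of_dvd Nat.card_pos hpH)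
    have hex : ∀ x : H, ∃ z : Z, ∃ h ∈ H, h * z = g * x * g⁻¹ := by
      intro x
      obtain ⟨h, hh, z, hz, e⟩ := hdec _ (hKN.conj_mem x (hHK x.2) g)
      exact ⟨⟨z, hz⟩, h, hh, e⟩
    choose φ h hh e using hex
    rw [← hZp]
    apply Nat.card_le_card_of_injective φ
    intro x y hxy
    have h1 : g * (x * (y : G)⁻¹) * g⁻¹ = h x * (h y)⁻¹ := by
      have : g * (x * (y : G)⁻¹) * g⁻¹ = (g * x * g⁻¹) * (g * y * g⁻¹)⁻¹ := by group
      rw [this, ← e, ← e, hxy]; group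
    have h2 := htriv g hg (x * (y : G)⁻¹) (mul_mem x.2 (inv_mem y.2))
      (by rw [h1]; exact mul_mem (hh x) (inv_mem (hh y)))
    exact Subtype.ext (mul_inv_eq_one.1 h2)
  have hG2 : Nat.card G = 2 * p ^ 2 := by rw [hG, hHp]; ring
  obtain ⟨τ, hτ⟩ := exists_prime_orderOf_dvd_card' (G := G) 2 ⟨p ^ 2, hG2⟩
  have hτK : τ ∉ K := by
    intro h
    have h1 : orderOf (⟨τ, h⟩ : K) ∣ Nat.card K := orderOf_dvd_natCard _
    rw [Subgroup.orderOf_mk, hτ, hcK, hHp] at h1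
    have : Odd (p * p) := hodd.mul hodd
    exact (Nat.not_even_iff_odd.2 this) (even_iff_two_dvd.2 h1)
  refine ⟨K, hHK, hKi, wreath_iso hodd H hHp τ hτ ?_ (htriv τ hτK) hG2⟩
  intro x hx y hy
  have hx' : τ⁻¹ * x * τ ∈ K := by
    have := hKN.conj_mem x (hHK hx) τ⁻¹
    simpa using this
  have hy' : τ * y * τ⁻¹ ∈ K := hKN.conj_mem y (hHK hy) τ
  have hw : (τ⁻¹ * x * τ) * y * (τ⁻¹ * x * τ)⁻¹ * y⁻¹ ∈ H :=
    mul_mem (hHn _ hx' y hy) (inv_mem hy)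
  have h1 : τ * ((τ⁻¹ * x * τ) * y * (τ⁻¹ * x * τ)⁻¹ * y⁻¹) * τ⁻¹ =
      x * ((τ * y * τ⁻¹) * x⁻¹ * (τ * y * τ⁻¹)⁻¹) := by group
  have h2 := htriv τ hτK _ hw (by
    rw [h1]; exact mul_mem hx (hHn _ hy' _ (inv_mem hx)))
  rw [h2] at h1
  have h3 : x * ((τ * y * τ⁻¹) * x⁻¹ * (τ * y * τ⁻¹)⁻¹) = 1 := by rw [← h1]; group
  have h4 : x * (τ * y * τ⁻¹) * (x⁻¹ * (τ * y * τ⁻¹)⁻¹) = 1 := by rw [← h3]; group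
  have h5 := eq_inv_of_mul_eq_one_left h4
  rw [h5]; group

/-- elements of coprime exponents are trivial -/
lemma cop_one {G : Type*} [Group G] {x : G} {m n : ℕ} (h : m.Coprime n) (h1 : x ^ m = 1)
    (h2 : x ^ n = 1) : x = 1 := by
  have := Nat.dvd_gcd (orderOf_dvd_of_pow_eq_one h1) (orderOf_dvd_of_pow_eq_one h2)
  rw [h] at this
  exact orderOf_eq_one_iff.1 (Nat.dvd_one.1 this)

lemma pow_card_mem {G : Type*} [Group G] [Finite G] {H : Subgroup G} {x : G} (hx : x ∈ H) :
    x ^ Nat.card H = 1 := by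
  have := pow_card_eq_one' (x := (⟨x, hx⟩ : H))
  exact congrArg Subtype.val this

lemma excl_ab {p : ℕ} [hp : Fact p.Prime] {G : Type*} [Group G] [Finite G]
    (h : Nonempty (G ≃* WreathCpC2 p)) : Nat.card G = 2 * p ^ 2 := by
  obtain ⟨e⟩ := h
  rw [Nat.card_congr e.toEquiv, SemidirectProduct.card, Nat.card_prod]
  simp; ring

lemma excl_bc {p : ℕ} (hp : p.Prime) (hodd : Odd p) {G : Type*} [Group G] [Finite G]
    (hpG : p ∣ Nat.card G)
    (f : G →* Aff1 p) (hf : Function.Injective f) (a : G) (ha : orderOf a = 2)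
    (hN : (Subgroup.zpowers a).Normal) : False := by
  have := Fact.mk hp
  have ha2 : a * a = 1 := by rw [← sq, ← ha]; exact pow_orderOf_eq_one a
  have ha1 : a ≠ 1 := by rintro rfl; simp at ha
  have hac : ∀ g, g * a * g⁻¹ = a := by
    intro g
    have h1 := hN.conj_mem a (Subgroup.mem_zpowers a) g
    obtain ⟨k, hk⟩ := Subgroup.mem_zpowers_iff.1 h1
    have h2 : a ^ (2 : ℤ) = 1 := by rw [zpow_two, ha2]
    rcases Int.even_or_odd' k with ⟨m, rfl | rfl⟩
    · rw [zpow_mul, h2, one_zpow] at hk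
      exfalso; apply ha1
      have := hk.symm
      rwa [conj_eq_one_iff] at this
    · rw [zpow_add, zpow_mul, h2, one_zpow, one_mul, zpow_one] at hk
      exact hk.symm
  obtain ⟨g, hg⟩ := exists_prime_orderOf_dvd_card' (G := G) p hpG
  apply ha1
  apply hf
  rw [map_one]
  refine aff_comm hp hodd (f g) (f a) ?_ ?_ ?_ ?_
  · have h1 : g ^ p = 1 := orderOf_dvd_iff_pow_eq_one.1 hg.dvd
    rw [← map_pow, h1, map_one]
  · intro h
    have : g = 1 := hf (h.trans (map_one f).symm)
    rw [this, orderOf_one] at hg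
    exact hp.one_lt.ne hg
  · rw [← map_pow, sq, ha2, map_one]
  · rw [← map_mul, ← map_mul]
    congr 1
    have := hac g
    rwa [mul_inv_eq_iff_eq_mul] at this

lemma caseB {p : ℕ} [hp : Fact p.Prime] (hodd : Odd p) {G : Type*} [Group G] [Finite G]
    (H : Subgroup G) (T : Set G) (hT : ∀ x : G, ∃! t, t ∈ T ∧ x * t⁻¹ ∈ H) (h1T : (1 : G) ∈ T)
    (hinv : ∀ t ∈ T, ∀ g : G, g * t * g⁻¹ ∈ T)
    (hFaith : IsFaithfulFolder H) (hgen : Subgroup.closure T = ⊤)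
    (hG : Nat.card G = Nat.card H * (2 * p)) (hTc : T.ncard = 2 * p)
    (P : Subgroup G) [hPN : P.Normal] (hP : Nat.card P = p) (hpH : ¬ p ∣ Nat.card H) :
    ∃ K : Subgroup G, H ≤ K ∧ K.index = 2 ∧
      ((∃ f : G →* Aff1 p, Function.Injective f) ∨
        (∃ a : G, orderOf a = 2 ∧ K.Normal ∧ (Subgroup.zpowers a).Normal ∧
          K ⊓ Subgroup.zpowers a = ⊥ ∧ K ⊔ Subgroup.zpowers a = ⊤ ∧
          Odd (Nat.card K) ∧ ∃ f : K →* Aff1 p, Function.Injective f)) ∧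
      (Subgroup.closure (T ∩ (K : Set G))).Normal ∧
          Nat.card (Subgroup.closure (T ∩ (K : Set G))) = p := by
  have hcop : p.Coprime (Nat.card H) := (Nat.Prime.coprime_iff_not_dvd hp.out).2 hpH
  have hPpow : ∀ x ∈ P, x ^ p = 1 := fun x hx => by
    have := pow_card_mem hx
    rwa [hP] at this
  have hPH : ∀ x ∈ P, x ∈ H → x = 1 := fun x hx hxH =>
    cop_one hcop (hPpow x hx) (pow_card_mem hxH)
  have hPcomm : ∀ x ∈ P, ∀ y ∈ P, x * y = y * x := by
    have := isCyclic_of_prime_card hP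
    intro x hx y hy
    have := (IsCyclic.isMulCommutative (α := P)).is_comm.comm (⟨x, hx⟩ : P) ⟨y, hy⟩
    exact congrArg Subtype.val this
  have hP2 : ∀ x ∈ P, x ^ 2 = 1 → x = 1 := fun x hx h =>
    cop_one (hodd.coprime_two_right) (hPpow x hx) h
  have hPp : IsPGroup p P := IsPGroup.of_card (n := 1) (by rw [hP, pow_one])
  set K := H ⊔ P with hK
  have hcK : Nat.card K = Nat.card H * p := by rw [hK, card_sup' H P hPH, hP]
  have hKi : K.index = 2 := index_two K (by rw [hG, hcK]; ring)
  have hKN : K.Normal := Subgroup.normal_of_index_eq_two hKi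
  have hHK : H ≤ K := le_sup_left
  have hPK : P ≤ K := le_sup_right
  have hdec : ∀ k ∈ K, ∃ h ∈ H, ∃ z ∈ P, h * z = k := by
    intro k hk
    exact Subgroup.mem_sup_of_normal_right.1 hk
  have hTK : (T ∩ (K : Set G)).ncard = p := by
    have h1 := card_trans H K T hT hHK
    rw [hcK] at h1
    exact (Nat.eq_of_mul_eq_mul_left Nat.card_pos h1).symm
  -- an element of K centralizing P lies in P
  have hcp : ∀ g x y : G, (∀ z ∈ P, z * x = x * z) → ∀ z ∈ P, z * (g * x * g⁻¹) = (g * x * g⁻¹) * z := by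
    intro g x _ h z hz
    have h1 := h (g⁻¹ * z * g) (by simpa using hPN.conj_mem z hz g⁻¹)
    calc z * (g * x * g⁻¹) = g * ((g⁻¹ * z * g) * x) * g⁻¹ := by group
      _ = _ := by rw [h1]; group
  have hH1 : ∀ h ∈ H, (∀ z ∈ P, z * h = h * z) → h = 1 := by
    intro h hh hc
    apply hFaith
    intro g
    obtain ⟨h', hh', x, hx, e⟩ := hdec _ (hKN.conj_mem h (hHK hh) g)
    have hc' := hcp g h 1 hc
    have hch' : Commute h' x := by
      have := hc' x hx
      rw [← e] at this
      have h3 : x * h' = h' * x := by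
        have : x * h' * x = h' * x * x := by rw [mul_assoc x]; exact this
        exact mul_right_cancel this
      exact h3.symm
    have hpw : (h' * x) ^ Nat.card H = 1 := by
      rw [e, conj_pow, pow_card_mem hh]; simp
    rw [hch'.mul_pow, pow_card_mem hh', one_mul] at hpw
    have hx1 := cop_one hcop (hPpow x hx) hpw
    rw [← e, hx1, mul_one]; exact hh'
  have hCK : ∀ k ∈ K, (∀ z ∈ P, z * k = k * z) → k ∈ P := by
    intro k hk hc
    obtain ⟨h, hh, x, hx, rfl⟩ := hdec k hk
    have : h = 1 := by
      apply hH1 h hh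
      intro z hz
      have h1 := hc z hz
      rw [mul_assoc h x z, hPcomm x hx z hz, ← mul_assoc, ← mul_assoc] at h1
      exact mul_right_cancel h1
    rw [this, one_mul]; exact hx
  have hTKP : T ∩ (K : Set G) = P := by
    have hsub : {a | a ∈ T ∩ (K : Set G) ∧ ∀ x ∈ P, x * a = a * x} ⊆ T ∩ (K : Set G) :=
      fun a ha => ha.1
    have hmod := pfix P hPp (T ∩ (K : Set G)) (fun x _ a ha =>
      ⟨hinv a ha.1 x, hKN.conj_mem a ha.2 x⟩)
    rw [hTK] at hmod
    have hdvd : p ∣ {a | a ∈ T ∩ (K : Set G) ∧ ∀ x ∈ P, x * a = a * x}.ncard :=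
      (Nat.modEq_zero_iff_dvd.1 (hmod.symm.trans (by simp [Nat.ModEq])))
    have hpos : 0 < {a | a ∈ T ∩ (K : Set G) ∧ ∀ x ∈ P, x * a = a * x}.ncard := by
      rw [Set.ncard_pos (Set.toFinite _)]
      exact ⟨1, ⟨h1T, K.one_mem⟩, by simp⟩
    have heq := Set.eq_of_subset_of_ncard_le hsub (by
      rw [hTK]; exact Nat.le_of_dvd hpos hdvd) (Set.toFinite _)
    have hsub2 : T ∩ (K : Set G) ⊆ P := by
      intro t ht
      have ht2 := ht
      rw [← heq] at ht2
      exact hCK t ht.2 ht2.2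
    refine Set.eq_of_subset_of_ncard_le hsub2 ?_ (Set.toFinite _)
    rw [hTK]; exact le_of_eq hP
  refine ⟨K, hHK, hKi, ?_, ?_⟩
  swap
  · rw [hTKP, Subgroup.closure_eq]
    exact ⟨hPN, hP⟩
  by_cases hC : ∀ g : G, (∀ x ∈ P, g * x = x * g) → g ∈ P
  · left
    apply aff_embed P hP _ hC
    have h1 := P.card_mul_index
    rw [hP, hG] at h1
    have h2 : P.index = 2 * Nat.card H :=
      Nat.eq_of_mul_eq_mul_left hp.out.pos (by rw [h1]; ring)
    rw [hP, h2]
    exact Nat.Coprime.mul_right hodd.coprime_two_right hcop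
  right
  push Not at hC
  obtain ⟨c, hc, hcP⟩ := hC
  have hcK : c ∉ K := fun h => hcP (hCK c h (fun z hz => (hc z hz).symm))
  have hsq : ∀ g : G, g * g ∈ K := fun g => Subgroup.mul_self_mem_of_index_two hKi g
  have hc2 : c * c ∈ P := hCK _ (hsq c) (fun z hz => by
    rw [← mul_assoc, ← hc z hz, mul_assoc, ← hc z hz, mul_assoc])
  obtain ⟨m, hm⟩ := id hodd
  set a := c ^ p with ha
  have ha2 : a * a = 1 := by
    rw [ha, ← pow_add, ← two_mul, pow_mul, sq]; exact hPpow _ hc2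
  have haK : a ∉ K := by
    intro h
    rw [ha, hm, pow_succ, pow_mul, sq] at h
    have h2 : (c * c) ^ m ∈ K := pow_mem (hsq c) m
    exact hcK ((Subgroup.mul_mem_cancel_left K h2).1 h)
  have hac : ∀ z ∈ P, z * a = a * z := by
    intro z hz
    have : Commute z c := (hc z hz).symm
    exact this.pow_right p
  have ha1 : a ≠ 1 := fun h => haK (h ▸ K.one_mem)
  have hao : orderOf a = 2 := orderOf_eq_prime (by rw [sq, ha2]) ha1
  have hai : a⁻¹ = a := inv_eq_of_mul_eq_one_left ha2
  have hacen : ∀ g, g * a * g⁻¹ = a := by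
    intro g
    have h1 := hcp g a 1 hac
    have h2 : g * a * g⁻¹ ∉ K := fun h => haK (by
      have := hKN.conj_mem _ h g⁻¹
      have e : g⁻¹ * (g * a * g⁻¹) * g⁻¹⁻¹ = a := by group
      rwa [e] at this)
    have h3 : a * (g * a * g⁻¹) ∈ K :=
      (Subgroup.mul_mem_iff_of_index_two hKi).2 (iff_of_false haK h2)
    have h4 : a * (g * a * g⁻¹) ∈ P := hCK _ h3 (fun z hz => by
      rw [← mul_assoc, hac z hz, mul_assoc, h1 z hz, ← mul_assoc])
    set x := a * (g * a * g⁻¹) with hx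
    have h5 : g * a * g⁻¹ = a * x := by rw [hx, ← mul_assoc, ha2, one_mul]
    have h6 : (a * x) * (a * x) = 1 := by
      rw [← h5]
      have : g * a * g⁻¹ * (g * a * g⁻¹) = g * (a * a) * g⁻¹ := by group
      rw [this, ha2]; simp
    have h7 : x ^ 2 = 1 := by
      rw [mul_assoc, ← mul_assoc x, hac x h4, mul_assoc, ← mul_assoc, ha2, one_mul] at h6
      rw [sq]; exact h6
    rw [h5, hP2 x h4 h7, mul_one]
  refine ⟨a, hao, hKN, ?_, ?_, ?_, ?_, ?_⟩
  · refine ⟨fun x hx g => ?_⟩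
    obtain ⟨k, rfl⟩ := Subgroup.mem_zpowers_iff.1 hx
    rw [← conj_zpow, hacen]
    exact hx
  · rw [eq_bot_iff]
    rintro x ⟨hxK, hx⟩
    obtain ⟨k, rfl⟩ := Subgroup.mem_zpowers_iff.1 hx
    have h2 : a ^ (2 : ℤ) = 1 := by rw [zpow_two, ha2]
    rcases Int.even_or_odd' k with ⟨m, rfl | rfl⟩
    · rw [zpow_mul, h2, one_zpow]; exact one_mem _
    · exfalso; apply haK
      have hxK : a ^ (2 * m + 1) ∈ K := hxK
      rwa [zpow_add, zpow_mul, h2, one_zpow, one_mul, zpow_one] at hxK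
  · rw [eq_top_iff]
    intro g _
    have haS : a ∈ K ⊔ Subgroup.zpowers a :=
      (le_sup_right : _ ≤ K ⊔ Subgroup.zpowers a) (Subgroup.mem_zpowers a)
    by_cases hg : g ∈ K
    · exact (le_sup_left : K ≤ _) hg
    · have : g * a ∈ K := (Subgroup.mul_mem_iff_of_index_two hKi).2 (iff_of_false hg haK)
      have h2 : g * a ∈ K ⊔ Subgroup.zpowers a := (le_sup_left : K ≤ _) this
      exact (Subgroup.mul_mem_cancel_right _ haS).1 h2
  · by_contra hne
    rw [Nat.not_odd_iff_even] at hne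
    obtain ⟨⟨k, hkK⟩, hk⟩ := exists_prime_orderOf_dvd_card' (G := K) 2 hne.two_dvd
    rw [Subgroup.orderOf_mk] at hk
    have hk2 : k ^ 2 = 1 := by rw [← hk]; exact pow_orderOf_eq_one k
    have hkP : k ∉ P := by
      intro h
      rw [hP2 k h hk2] at hk
      simp at hk
    have hRc : (T \ (K : Set G)).ncard = p := by
      have h1 := Set.ncard_inter_add_ncard_diff_eq_ncard T (K : Set G) (Set.toFinite _)
      rw [hTK, hTc] at h1
      omega
    by_cases hall : ∀ t ∈ T, ∀ z ∈ P, z * t = t * z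
    · apply hkP
      apply hCK k hkK
      intro z hz
      have : Subgroup.closure T ≤ Subgroup.centralizer {z} := by
        rw [Subgroup.closure_le]
        intro t ht
        exact Subgroup.mem_centralizer_singleton_iff.2 (hall t ht z hz).symm
      rw [hgen] at this
      exact (Subgroup.mem_centralizer_singleton_iff.1 (this (Subgroup.mem_top k))).symm
    · push Not at hall
      obtain ⟨r, hrT, z, hz, hzr⟩ := hall
      have hrK : r ∉ K := by
        intro h
        have : r ∈ (P : Set G) := by rw [← hTKP]; exact ⟨hrT, h⟩
        exact hzr (hPcomm z hz r this)
      obtain ⟨horb, -⟩ := orb_all P hPp (T \ (K : Set G)) (fun x hx t ht =>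
        ⟨hinv t ht.1 x, fun h => ht.2 (by
          have := hKN.conj_mem _ h x⁻¹
          have e : x⁻¹ * (x * t * x⁻¹) * x⁻¹⁻¹ = t := by group
          rw [e] at this
          exact this)⟩) hRc r ⟨hrT, hrK⟩ (fun h => hzr (h z hz))
      have htop : Subgroup.zpowers r ⊔ P = ⊤ := by
        rw [eq_top_iff, ← hgen, Subgroup.closure_le]
        intro t ht
        have hrS : r ∈ Subgroup.zpowers r ⊔ P :=
          (le_sup_left : Subgroup.zpowers r ≤ _) (Subgroup.mem_zpowers r)
        have hPS : ∀ x ∈ P, x ∈ Subgroup.zpowers r ⊔ P := fun x hx =>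
          (le_sup_right : P ≤ _) hx
        by_cases htK : t ∈ K
        · have : t ∈ (P : Set G) := by rw [← hTKP]; exact ⟨ht, htK⟩
          exact hPS t this
        · have : t ∈ T \ (K : Set G) := ⟨ht, htK⟩
          rw [horb] at this
          obtain ⟨n, hn, rfl⟩ := this
          exact mul_mem (mul_mem (hPS n hn) hrS) (inv_mem (hPS n hn))
      have hdec2 : ∀ g : G, ∃ i : ℤ, ∃ x ∈ P, r ^ i * x = g := by
        intro g
        have : g ∈ Subgroup.zpowers r ⊔ P := by rw [htop]; trivial
        obtain ⟨y, hy, x, hx, e⟩ := Subgroup.mem_sup_of_normal_right.1 this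
        obtain ⟨i, rfl⟩ := Subgroup.mem_zpowers_iff.1 hy
        exact ⟨i, x, hx, e⟩
      have hsqP : ∀ (i : ℤ) (x : G), x ∈ P → (r ^ i * x) ^ 2 = 1 → r ^ (2 * i) ∈ P := by
        intro i x hx h
        have h1 : r ^ (2 * i) = (r ^ i * x) ^ 2 * (x⁻¹ * ((r ^ i)⁻¹ * x⁻¹ * (r ^ i))) := by
          rw [sq, two_mul, zpow_add]; group
        rw [h1, h, one_mul]
        refine mul_mem (inv_mem hx) ?_
        simpa using hPN.conj_mem x⁻¹ (inv_mem hx) (r ^ i)⁻¹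
      have hr2 : ∀ m : ℤ, r ^ (2 * m) ∈ K := by
        intro m
        rw [zpow_mul, zpow_two]; exact zpow_mem (hsq r) m
      obtain ⟨i, x, hx, hi⟩ := hdec2 a
      obtain ⟨j, y, hy, hj⟩ := hdec2 k
      have hi2 := hsqP i x hx (by rw [hi, sq, ha2])
      have hj2 := hsqP j y hy (by rw [hj, hk2])
      have hiodd : ∃ m : ℤ, i = 2 * m + 1 := by
        rcases Int.even_or_odd' i with ⟨m, h | h⟩
        · exfalso; apply haK
          rw [← hi, h]; exact mul_mem (hr2 m) (hPK hx)
        · exact ⟨m, h⟩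
      have hjeven : ∃ m : ℤ, j = 2 * m := by
        rcases Int.even_or_odd' j with ⟨m, h | h⟩
        · exact ⟨m, h⟩
        · exfalso; apply hrK
          rw [← hj, h] at hkK
          have h1 := (Subgroup.mul_mem_cancel_right K (hPK hy)).1 hkK
          rw [zpow_add, zpow_one] at h1
          exact (Subgroup.mul_mem_cancel_left K (hr2 m)).1 h1
      obtain ⟨m', hm'⟩ := hiodd
      obtain ⟨j', hj'⟩ := hjeven
      apply hkP
      rw [← hj]
      refine mul_mem ?_ hy
      have : r ^ j = (r ^ (2 * i)) ^ j' * (r ^ (2 * j)) ^ (-m') := by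
        rw [← zpow_mul, ← zpow_mul, ← zpow_add]
        congr 1
        rw [hj', hm']; ring
      rw [this]
      exact mul_mem (zpow_mem hi2 _) (zpow_mem hj2 _)
  · have hPKN : (P.subgroupOf K).Normal := Subgroup.normal_subgroupOf
    have hcPK : Nat.card (P.subgroupOf K) = p := by
      rw [← hP]; exact Nat.card_congr (Subgroup.subgroupOfEquivOfLe hPK).toEquiv
    apply aff_embed (P.subgroupOf K) hcPK
    · have h1 := (P.subgroupOf K).card_mul_index
      rw [hcPK, ‹Nat.card K = Nat.card H * p›] at h1
      have h2 : (P.subgroupOf K).index = Nat.card H :=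
        Nat.eq_of_mul_eq_mul_left hp.out.pos (by rw [h1]; ring)
      rw [hcPK, h2]; exact hcop
    · intro g hg
      rw [Subgroup.mem_subgroupOf]
      apply hCK g g.2
      intro z hz
      have := hg ⟨z, hPK hz⟩ (by rw [Subgroup.mem_subgroupOf]; exact hz)
      exact (congrArg Subtype.val this).symm

lemma cent_inter {p : ℕ} [hp : Fact p.Prime] {G : Type*} [Group G] [Finite G]
    (H : Subgroup G) (hFaith : IsFaithfulFolder H)
    (hG : Nat.card G = Nat.card H * (2 * p))
    (P : Subgroup G) (hP : Nat.card P = p) (hpH : ¬ p ∣ Nat.card H)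
    (d : G) (hd : d ∈ H) (hdc : ∀ x ∈ P, x * d = d * x) : d = 1 := by
  have hcop : p.Coprime (Nat.card H) := (Nat.Prime.coprime_iff_not_dvd hp.out).2 hpH
  have hPpow : ∀ x ∈ P, x ^ p = 1 := fun x hx => by
    have := pow_card_mem hx
    rwa [hP] at this
  have hΩ : Nat.card (G ⧸ H) = 2 * p := by
    have h1 := H.card_mul_index
    rw [hG] at h1
    exact Nat.eq_of_mul_eq_mul_left Nat.card_pos h1
  have hsemi : ∀ ω : G ⧸ H, Function.Injective (fun x : P => (x : G) • ω) := by
    intro ω x y hxy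
    obtain ⟨g, rfl⟩ := QuotientGroup.mk_surjective ω
    have hxy : ((x * g : G) : G ⧸ H) = ((y * g : G) : G ⧸ H) := hxy
    rw [QuotientGroup.eq] at hxy
    have h1 := pow_card_mem hxy
    have e : ((x : G) * g)⁻¹ * (y * g) = g⁻¹ * ((x : G)⁻¹ * y) * g⁻¹⁻¹ := by group
    have h2 : (((x : G) * g)⁻¹ * (y * g)) ^ p = 1 := by
      rw [e, conj_pow, hPpow _ (mul_mem (inv_mem x.2) y.2)]; simp
    have h3 := cop_one hcop h2 h1
    rw [e, conj_eq_one_iff, inv_mul_eq_one] at h3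
    exact Subtype.ext h3
  set ω1 : G ⧸ H := ((1 : G) : G ⧸ H) with hω1
  have hdω1 : d • ω1 = ω1 := by
    change ((d * 1 : G) : G ⧸ H) = ((1 : G) : G ⧸ H)
    rw [QuotientGroup.eq]; simpa using hd
  have hcard : ∀ ω : G ⧸ H, (Set.range (fun x : P => (x : G) • ω)).ncard = p := by
    intro ω
    rw [← Set.image_univ, Set.ncard_image_of_injective _ (hsemi ω), Set.ncard_univ, hP]
  have hfix : ∀ ω : G ⧸ H, d ^ p • ω = ω := by
    intro ω
    by_cases hω : ω ∈ Set.range (fun x : P => (x : G) • ω1)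
    · obtain ⟨x, rfl⟩ := hω
      have h1 : d • ((x : G) • ω1) = (x : G) • ω1 := by
        rw [smul_smul, ← hdc x x.2, ← smul_smul, hdω1]
      have : ∀ n : ℕ, d ^ n • ((x : G) • ω1) = (x : G) • ω1 := by
        intro n
        induction n with
        | zero => simp
        | succ k ih => rw [pow_succ, ← smul_smul, h1, ih]
      exact this p
    · have hdis : Disjoint (Set.range (fun x : P => (x : G) • ω1))
          (Set.range (fun x : P => (x : G) • ω)) := by
        rw [Set.disjoint_left]
        rintro _ ⟨x, rfl⟩ ⟨y, hy⟩
        apply hω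
        refine ⟨y⁻¹ * x, ?_⟩
        simp only at hy ⊢
        rw [Subgroup.coe_mul, ← smul_smul, ← hy, smul_smul]
        simp
      have hun := Set.ncard_union_eq hdis (Set.toFinite _) (Set.toFinite _)
      rw [hcard, hcard] at hun
      have huniv : Set.range (fun x : P => (x : G) • ω1) ∪
          Set.range (fun x : P => (x : G) • ω) = Set.univ := by
        apply Set.eq_of_subset_of_ncard_le (Set.subset_univ _) _ (Set.toFinite _)
        rw [hun, Set.ncard_univ, hΩ]; omega
      have hmem : d • ω ∈ Set.range (fun x : P => (x : G) • ω1) ∪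
          Set.range (fun x : P => (x : G) • ω) := by rw [huniv]; trivial
      rcases hmem with ⟨x, hx⟩ | ⟨x, hx⟩
      · exfalso; apply hω
        refine ⟨x, ?_⟩
        simp only at hx ⊢
        have h1 : d⁻¹ • ω1 = ω1 := by rw [inv_smul_eq_iff, hdω1]
        have h2 : ω = d⁻¹ • ((x : G) • ω1) := by rw [hx]; simp
        have h3 : (d⁻¹ * x : G) = x * d⁻¹ := by
          rw [inv_mul_eq_iff_eq_mul, ← mul_assoc, ← hdc x x.2]; simp
        rw [h2, smul_smul, h3, ← smul_smul, h1]
      · simp only at hx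
        have hpw : ∀ n : ℕ, d ^ n • ω = (x : G) ^ n • ω := by
          intro n
          induction n with
          | zero => simp
          | succ k ih =>
            have hcm : Commute (x : G) (d ^ k) := (show Commute (x : G) d from hdc x x.2).pow_right k
            rw [pow_succ, ← smul_smul, ← hx, smul_smul, ← hcm.eq, ← smul_smul, ih, smul_smul,
              ← pow_succ']
        rw [hpw, hPpow x x.2, one_smul]
  have hdp : d ^ p = 1 := by
    apply hFaith
    intro g
    have h1 := hfix ((g⁻¹ : G) : G ⧸ H)
    have h1 : ((d ^ p * g⁻¹ : G) : G ⧸ H) = ((g⁻¹ : G) : G ⧸ H) := h1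
    rw [eq_comm, QuotientGroup.eq] at h1
    simpa [mul_assoc] using h1
  exact cop_one hcop hdp (pow_card_mem hd)

lemma caseC {p : ℕ} [hp : Fact p.Prime] (hodd : Odd p) {G : Type*} [Group G] [Finite G]
    (H : Subgroup G) (T : Set G) (hT : ∀ x : G, ∃! t, t ∈ T ∧ x * t⁻¹ ∈ H) (h1T : (1 : G) ∈ T)
    (hinv : ∀ t ∈ T, ∀ g : G, g * t * g⁻¹ ∈ T)
    (hFaith : IsFaithfulFolder H)
    (hG : Nat.card G = Nat.card H * (2 * p)) (hTc : T.ncard = 2 * p)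
    (P : Sylow p G) (hP : Nat.card P = p) (hpH : ¬ p ∣ Nat.card H)
    (S : Set G) (hS : S = {a | a ∈ T ∧ ∀ x ∈ (P : Subgroup G), x * a = a * x})
    (hSc : S.ncard = p)
    (horb : ∀ r ∈ T \ S, T \ S = {y | ∃ n ∈ (P : Subgroup G), y = n * r * n⁻¹}) :
    (P : Subgroup G).Normal := by
  by_contra hnn
  have hcop : p.Coprime (Nat.card H) := (Nat.Prime.coprime_iff_not_dvd hp.out).2 hpH
  have hP' : Nat.card (P : Subgroup G) = p := hP
  have hPpow : ∀ x ∈ (P : Subgroup G), x ^ p = 1 := fun x hx => by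
    have := pow_card_mem hx
    rwa [hP'] at this
  have hPcomm : ∀ x ∈ (P : Subgroup G), ∀ y ∈ (P : Subgroup G), x * y = y * x := by
    have := isCyclic_of_prime_card hP'
    intro x hx y hy
    have := (IsCyclic.isMulCommutative (α := (P : Subgroup G))).is_comm.comm
      (⟨x, hx⟩ : (P : Subgroup G)) ⟨y, hy⟩
    exact congrArg Subtype.val this
  have hP2 : ∀ x ∈ (P : Subgroup G), x ^ 2 = 1 → x = 1 := fun x hx h =>
    cop_one (hodd.coprime_two_right) (hPpow x hx) h
  have hPgen : ∀ x ∈ (P : Subgroup G), x ≠ 1 → ∀ y ∈ (P : Subgroup G), ∃ k : ℤ, x ^ k = y := by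
    intro x hx hx1 y hy
    have : (⟨y, hy⟩ : (P : Subgroup G)) ∈ Subgroup.zpowers (⟨x, hx⟩ : (P : Subgroup G)) :=
      mem_zpowers_of_prime_card hP' (fun h => hx1 (congrArg Subtype.val h))
    obtain ⟨k, hk⟩ := Subgroup.mem_zpowers_iff.1 this
    exact ⟨k, congrArg Subtype.val hk⟩
  set C := Subgroup.centralizer ((P : Subgroup G) : Set G) with hCdef
  have hCm : ∀ c, c ∈ C ↔ ∀ x ∈ (P : Subgroup G), x * c = c * x := fun c => Subgroup.mem_centralizer_iff
  have hPC : (P : Subgroup G) ≤ C := fun x hx => (hCm x).2 (fun y hy => hPcomm y hy x hx)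
  have hCH : ∀ d ∈ C, d ∈ H → d = 1 := fun d hd hdH =>
    cent_inter H hFaith hG (P : Subgroup G) hP' hpH d hdH ((hCm d).1 hd)
  have hCc : Nat.card C ≤ 2 * p := by
    have hinj : Function.Injective (fun z : C × H => (z.1 : G) * z.2) := by
      rintro ⟨c, h⟩ ⟨c', h'⟩ e
      have e : (c : G) * h = c' * h' := e
      have e2 : (c' : G)⁻¹ * c = h' * (h : G)⁻¹ := by
        rw [inv_mul_eq_iff_eq_mul, ← mul_assoc, ← e]; simp
      have e3 := hCH _ (mul_mem (inv_mem c'.2) c.2) (by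
        rw [e2]; exact mul_mem h'.2 (inv_mem h.2))
      have e4 : c = c' := Subtype.ext (inv_mul_eq_one.1 e3).symm
      rw [e3] at e2
      have e5 : h = h' := Subtype.ext (mul_inv_eq_one.1 e2.symm).symm
      rw [e4, e5]
    have h1 := Nat.card_le_card_of_injective _ hinj
    rw [Nat.card_prod, hG, mul_comm] at h1
    exact Nat.le_of_mul_le_mul_left h1 Nat.card_pos
  have hC2 : ∀ x ∈ C, ∀ y ∈ C, x ∉ (P : Subgroup G) → y ∉ (P : Subgroup G) → x * y ∈ (P : Subgroup G) := by
    intro x hx y hy hxP hyP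
    have h1 := ((P : Subgroup G).subgroupOf C).card_mul_index
    have hcPC : Nat.card ((P : Subgroup G).subgroupOf C) = p :=
      (Nat.card_congr (Subgroup.subgroupOfEquivOfLe hPC).toEquiv).trans hP'
    rw [hcPC] at h1
    have h2 : ((P : Subgroup G).subgroupOf C).index ≤ 2 := by
      rw [← h1, mul_comm] at hCc
      exact Nat.le_of_mul_le_mul_right hCc hp.out.pos
    have h0 : ((P : Subgroup G).subgroupOf C).index ≠ 0 := Subgroup.index_ne_zero_of_finite
    have h3 : ((P : Subgroup G).subgroupOf C).index ≠ 1 := by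
      intro h
      rw [Subgroup.index_eq_one] at h
      have : (⟨x, hx⟩ : C) ∈ (P : Subgroup G).subgroupOf C := by rw [h]; trivial
      exact hxP (Subgroup.mem_subgroupOf.1 this)
    have h4 : ((P : Subgroup G).subgroupOf C).index = 2 := by omega
    have h5 := (Subgroup.mul_mem_iff_of_index_two h4 (a := ⟨x, hx⟩) (b := ⟨y, hy⟩)).2
      (iff_of_false (fun h => hxP (Subgroup.mem_subgroupOf.1 h))
        (fun h => hyP (Subgroup.mem_subgroupOf.1 h)))
    exact Subgroup.mem_subgroupOf.1 h5
  have hCsq : ∀ x ∈ C, x * x ∈ (P : Subgroup G) := by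
    intro x hx
    by_cases h : x ∈ (P : Subgroup G)
    · exact mul_mem h h
    · exact hC2 x hx x hx h h
  have hCcomm : ∀ x ∈ C, ∀ y ∈ C, x * y = y * x := by
    intro x hx y hy
    by_cases h : x ∈ (P : Subgroup G)
    · exact (hCm y).1 hy x h
    by_cases h' : y ∈ (P : Subgroup G)
    · exact ((hCm x).1 hx y h').symm
    have h1 := (hCm x).1 hx _ (hC2 x hx y hy h h')
    rw [mul_assoc] at h1
    exact (mul_left_cancel h1).symm
  have hSC : ∀ s ∈ S, s ∈ C := by
    intro s hs
    rw [hS] at hs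
    exact (hCm s).2 hs.2
  have hST : S ⊆ T := by rw [hS]; exact fun x hx => hx.1
  have hcent : ∀ s ∈ S, s * s ≠ 1 → Subgroup.centralizer {s} = C := by
    intro s hs hs2
    apply le_antisymm
    · intro g hg
      rw [Subgroup.mem_centralizer_singleton_iff] at hg
      rw [hCm]
      intro x hx
      obtain ⟨k, rfl⟩ := hPgen _ (hCsq s (hSC s hs)) hs2 x hx
      have hg : Commute s g := hg.symm
      exact ((hg.mul_left hg).zpow_left k)
    · intro c hc
      rw [Subgroup.mem_centralizer_singleton_iff]
      exact hCcomm c hc s (hSC s hs)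
  set N := Subgroup.normalizer ((P : Subgroup G) : Set G) with hN
  have hNm : ∀ s ∈ S, s * s ≠ 1 → ∀ g, g * s * g⁻¹ ∈ S → g ∈ N := by
    intro s hs hs2 g hg
    have h1 := hCsq _ (hSC _ hg)
    have e : g * s * g⁻¹ * (g * s * g⁻¹) = g * (s * s) * g⁻¹ := by group
    rw [e] at h1
    have hle : ∀ x ∈ (P : Subgroup G), g * x * g⁻¹ ∈ (P : Subgroup G) := by
      intro x hx
      obtain ⟨k, rfl⟩ := hPgen _ (hCsq s (hSC s hs)) hs2 x hx
      rw [← conj_zpow]; exact zpow_mem h1 k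
    have hinjP : Function.Injective (fun x : (P : Subgroup G) =>
        (⟨g * x * g⁻¹, hle x x.2⟩ : (P : Subgroup G))) := by
      intro x y h
      have := congrArg Subtype.val h
      simpa using this
    have hsurj := (Finite.injective_iff_surjective.1 hinjP)
    rw [hN, Subgroup.mem_normalizer_iff]
    intro x
    refine ⟨hle x, fun h => ?_⟩
    obtain ⟨y, hy⟩ := hsurj ⟨_, h⟩
    have := congrArg Subtype.val hy
    have e2 : (y : G) = x := by simpa using this
    rw [← e2]; exact y.2
  have hNtop : ∃ g, g ∉ N := by
    by_contra h
    push Not at h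
    apply hnn
    rw [← Subgroup.normalizer_eq_top_iff, eq_top_iff]
    intro x _; exact h x
  obtain ⟨g0, hg0⟩ := hNtop
  have hSR : ∀ s ∈ S, s * s ≠ 1 → g0 * s * g0⁻¹ ∈ T \ S := fun s hs hs2 =>
    ⟨hinv s (hST hs) g0, fun h => hg0 (hNm s hs hs2 g0 h)⟩
  have hp3 : 2 < p := lt_of_le_of_ne hp.out.two_le (by rintro rfl; exact absurd hodd (by decide))
  -- choose s0
  have hs0 : ∃ s ∈ S, s * s ≠ 1 := by
    by_contra h
    push Not at h
    have huniq : ∀ x ∈ S, ∀ y ∈ S, x ≠ 1 → y ≠ 1 → x = y := by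
      intro x hx y hy hx1 hy1
      have hxP : x ∉ (P : Subgroup G) := fun h' => hx1 (hP2 x h' (by rw [sq, h x hx]))
      have hyP : y ∉ (P : Subgroup G) := fun h' => hy1 (hP2 y h' (by rw [sq, h y hy]))
      have hxy := hC2 x (hSC x hx) y (hSC y hy) hxP hyP
      have hcm : Commute x y := hCcomm x (hSC x hx) y (hSC y hy)
      have h1 := hP2 _ hxy (by rw [hcm.mul_pow, sq, sq, h x hx, h y hy, one_mul])
      have h2 := eq_inv_of_mul_eq_one_left h1
      rw [h2]; exact inv_eq_of_mul_eq_one_left (h y hy)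
    have hle : (S \ {1}).ncard ≤ 1 := by
      rw [Set.ncard_le_one (Set.toFinite _)]
      intro a ha b hb
      exact huniq a ha.1 b hb.1 ha.2 hb.2
    have h3 := Set.ncard_le_ncard_diff_add_ncard S {1} (Set.toFinite _)
    rw [Set.ncard_singleton] at h3
    omega
  obtain ⟨s0, hs0, hs02⟩ := hs0
  set D := {y | ∃ n ∈ (⊤ : Subgroup G), y = n * s0 * n⁻¹} with hD
  have hDT : D ⊆ T := by
    rintro y ⟨n, -, rfl⟩; exact hinv s0 (hST hs0) n
  have hDconj : ∀ y ∈ D, ∀ g, g * y * g⁻¹ ∈ D := by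
    rintro y ⟨n, -, rfl⟩ g
    exact ⟨g * n, trivial, by group⟩
  have hRD : T \ S ⊆ D := by
    rw [horb _ (hSR s0 hs0 hs02)]
    rintro y ⟨n, -, rfl⟩
    exact hDconj _ ⟨g0, trivial, rfl⟩ n
  have hTD : ∀ t ∈ T, t ∉ D → t * t = 1 := by
    intro t ht htD
    by_contra h2
    have htS : t ∈ S := by
      by_contra h; exact htD (hRD ⟨ht, h⟩)
    have h1 := hDconj _ (hRD (hSR t htS h2)) g0⁻¹
    have e : g0⁻¹ * (g0 * t * g0⁻¹) * g0⁻¹⁻¹ = t := by group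
    rw [e] at h1
    exact htD h1
  have h1D : (1 : G) ∉ D := by
    rintro ⟨n, -, h⟩
    have := conj_eq_one_iff.1 h.symm
    rw [this] at hs02; simp at hs02
  have hDc : D.ncard = C.index := by
    rw [hD, orb_card, hcent s0 hs0 hs02, Subgroup.relIndex_top_right]
  have hDS : D ∩ S = {y | ∃ n ∈ N, y = n * s0 * n⁻¹} := by
    ext y
    constructor
    · rintro ⟨⟨n, -, rfl⟩, hy⟩
      exact ⟨n, hNm s0 hs0 hs02 n hy, rfl⟩
    · rintro ⟨n, hn, rfl⟩
      refine ⟨⟨n, trivial, rfl⟩, ?_⟩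
      rw [hS]
      refine ⟨hinv s0 (hST hs0) n, ?_⟩
      intro x hx
      have hx' : n⁻¹ * x * n ∈ (P : Subgroup G) := by
        have := (Subgroup.mem_normalizer_iff.1 (inv_mem hn) x).1 hx
        simpa using this
      have h1 := (hCm s0).1 (hSC s0 hs0) _ hx'
      calc x * (n * s0 * n⁻¹) = n * ((n⁻¹ * x * n) * s0) * n⁻¹ := by group
        _ = _ := by rw [h1]; group
  have hDSc : (D ∩ S).ncard = C.relIndex N := by
    rw [hDS, orb_card, hcent s0 hs0 hs02]
  have hCN : C ≤ N := by
    intro c hc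
    rw [hN, Subgroup.mem_normalizer_iff]
    intro x
    constructor
    · intro hx
      have := (hCm c).1 hc x hx
      rw [← this]; simpa using hx
    · intro hx
      have := (hCm c).1 hc _ hx
      have e : x = c * x * c⁻¹ := by
        have : c * x = c * (c * x * c⁻¹) := by rw [← this]; group
        exact mul_left_cancel this
      rw [e]; exact hx
  have hdvd : (D ∩ S).ncard ∣ D.ncard := by
    rw [hDSc, hDc]
    exact ⟨_, (Subgroup.relIndex_mul_index hCN).symm⟩
  have hRc : (T \ S).ncard = p := by
    have := Set.ncard_diff_add_ncard_of_subset hST (Set.toFinite _)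
    omega
  have hDsum : D.ncard = (D ∩ S).ncard + p := by
    have h1 := Set.ncard_inter_add_ncard_diff_eq_ncard D S (Set.toFinite _)
    have h2 : D \ S = T \ S := by
      ext y
      exact ⟨fun h => ⟨hDT h.1, h.2⟩, fun h => ⟨hRD h, h.2⟩⟩
    rw [h2, hRc] at h1
    exact h1.symm
  have hDlt : D.ncard < 2 * p := by
    rw [← hTc]
    apply Set.ncard_lt_ncard _ (Set.toFinite _)
    exact ⟨hDT, fun h => h1D (h h1T)⟩
  have hm1 : (D ∩ S).ncard = 1 := by
    rw [hDsum] at hdvd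
    have h1 : (D ∩ S).ncard ∣ p := (Nat.dvd_add_right (dvd_refl _)).1 hdvd
    rcases (Nat.dvd_prime hp.out).1 h1 with h | h
    · exact h
    · omega
  have hNC : N ≤ C := by
    rw [hDSc] at hm1
    exact Subgroup.relIndex_eq_one.1 hm1
  let φ := MonoidHom.transferSylow P hNC
  have hker := MonoidHom.ker_transferSylow_isComplement' P hNC
  have hrange : Nat.card φ.range = p := by
    have h1 := hker.card_mul_card
    have h2 := φ.ker.card_mul_index
    have h3 : φ.ker.index = Nat.card P := Nat.eq_of_mul_eq_mul_left Nat.card_pos (h2.trans h1.symm)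
    rw [Subgroup.index_ker] at h3
    rw [h3, hP]
  have hφp : ∀ g, φ g ^ p = 1 := by
    intro g
    have := pow_card_eq_one' (x := φ g)
    rwa [hP'] at this
  have hφH : ∀ h ∈ H, φ h = 1 := by
    intro h hh
    exact cop_one hcop (hφp h) (by rw [← map_pow, pow_card_mem hh, map_one])
  have hφc : ∀ x y, φ x * φ y = φ y * φ x := by
    intro x y
    exact Subtype.ext (hPcomm _ (φ x).2 _ (φ y).2)
  have hφT : ∀ t ∈ T, φ t = 1 ∨ φ t = φ s0 := by
    intro t ht
    by_cases h : t ∈ D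
    · right
      obtain ⟨n, -, rfl⟩ := h
      rw [map_mul, map_mul, map_inv, hφc n s0]; simp
    · left
      exact cop_one hodd.coprime_two_right (hφp t)
        (by rw [← map_pow, sq, hTD t ht h, map_one])
  have hsub : (φ.range : Set P) ⊆ {1, φ s0} := by
    rintro _ ⟨g, rfl⟩
    obtain ⟨t, ⟨ht, hgt⟩, -⟩ := hT g
    have h1 := hφH _ hgt
    rw [map_mul, map_inv, mul_inv_eq_one] at h1
    rw [h1]
    exact hφT t ht
  have h1 := Set.ncard_le_ncard hsub (Set.toFinite _)
  have h2 : ({1, φ s0} : Set P).ncard ≤ 2 := (Set.ncard_insert_le _ _).trans (by simp)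
  have h3 : (φ.range : Set P).ncard = p := hrange
  omega

lemma central_card {p : ℕ} [hp : Fact p.Prime] (hodd : Odd p) {G : Type*} [Group G] [Finite G]
    (H : Subgroup G) (hFaith : IsFaithfulFolder H) (Z : Subgroup G)
    (hZ : ∀ z ∈ Z, ∀ g, g * z = z * g) (n : ℕ) (hZp : Nat.card Z ∣ p ^ n)
    (hG : Nat.card G = Nat.card H * (2 * p)) : Nat.card Z ∣ p := by
  have hZN : Z.Normal := ⟨fun z hz g => by rw [hZ z hz g]; simpa using hz⟩
  have hZH : ∀ z ∈ Z, z ∈ H → z = 1 := by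
    intro z hz hzH
    apply hFaith
    intro g
    rw [hZ z hz g]; simpa using hzH
  have h1 := Subgroup.card_subgroup_dvd_card (H ⊔ Z)
  rw [card_sup' H Z hZH, hG] at h1
  have h2 : Nat.card Z ∣ 2 * p := Nat.dvd_of_mul_dvd_mul_left Nat.card_pos h1
  have h3 : (Nat.card Z).Coprime 2 :=
    Nat.Coprime.coprime_dvd_left hZp (Nat.Coprime.pow_left n hodd.coprime_two_right)
  exact h3.dvd_of_dvd_mul_left h2

/-- the classification, before mutual exclusivity -/
lemma main_class {p : ℕ} [hp : Fact p.Prime] (hodd : Odd p) {G : Type*} [Group G] [Finite G]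
    (H : Subgroup G) (T : Set G) (hT : ∀ x : G, ∃! t, t ∈ T ∧ x * t⁻¹ ∈ H) (h1T : (1 : G) ∈ T)
    (hinv : ∀ t ∈ T, ∀ g : G, g * t * g⁻¹ ∈ T)
    (hFaith : IsFaithfulFolder H) (hgen : Subgroup.closure T = ⊤)
    (hG : Nat.card G = Nat.card H * (2 * p)) (hTc : T.ncard = 2 * p) :
    ∃ K : Subgroup G, H ≤ K ∧ K.index = 2 ∧ (Nonempty (G ≃* WreathCpC2 p) ∨
      ((∃ f : G →* Aff1 p, Function.Injective f) ∨
        (∃ a : G, orderOf a = 2 ∧ K.Normal ∧ (Subgroup.zpowers a).Normal ∧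
          K ⊓ Subgroup.zpowers a = ⊥ ∧ K ⊔ Subgroup.zpowers a = ⊤ ∧
          Odd (Nat.card K) ∧ ∃ f : K →* Aff1 p, Function.Injective f)) ∧
      (Subgroup.closure (T ∩ (K : Set G))).Normal ∧
          Nat.card (Subgroup.closure (T ∩ (K : Set G))) = p) := by
  obtain ⟨P⟩ : Nonempty (Sylow p G) := inferInstance
  have hpG : p ∣ Nat.card G := ⟨Nat.card H * 2, by rw [hG]; ring⟩
  obtain ⟨n, hn⟩ := IsPGroup.iff_card.1 P.isPGroup'
  have hpP : p ∣ Nat.card P := P.dvd_card_of_dvd_card hpG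
  have hpH : Nat.card P = p → ¬ p ∣ Nat.card H := by
    rintro h ⟨k, hk⟩
    have h1 : p ^ 2 ∣ Nat.card G := ⟨k * 2, by rw [hG, hk]; ring⟩
    have h2 : p ^ 2 ∣ Nat.card P := P.pow_dvd_card_of_pow_dvd_card h1
    rw [h] at h2
    have h3 := Nat.le_of_dvd hp.out.pos h2
    have := hp.out.two_le
    nlinarith
  have hcenT : ∀ z : G, (∀ t ∈ T, z * t = t * z) → ∀ g, g * z = z * g := by
    intro z hz g
    have : Subgroup.closure T ≤ Subgroup.centralizer {z} := by
      rw [Subgroup.closure_le]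
      intro t ht
      exact Subgroup.mem_centralizer_singleton_iff.2 (hz t ht).symm
    rw [hgen] at this
    exact Subgroup.mem_centralizer_singleton_iff.1 (this (Subgroup.mem_top g))
  have hBfin : (P : Subgroup G).Normal → Nat.card P = p → ∃ K : Subgroup G, H ≤ K ∧ K.index = 2 ∧ (Nonempty (G ≃* WreathCpC2 p) ∨
      ((∃ f : G →* Aff1 p, Function.Injective f) ∨
        (∃ a : G, orderOf a = 2 ∧ K.Normal ∧ (Subgroup.zpowers a).Normal ∧
          K ⊓ Subgroup.zpowers a = ⊥ ∧ K ⊔ Subgroup.zpowers a = ⊤ ∧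
          Odd (Nat.card K) ∧ ∃ f : K →* Aff1 p, Function.Injective f)) ∧
      (Subgroup.closure (T ∩ (K : Set G))).Normal ∧
          Nat.card (Subgroup.closure (T ∩ (K : Set G))) = p) := by
    intro hPN hPp
    obtain ⟨K, h1, h2, h3⟩ := caseB hodd H T hT h1T hinv hFaith hgen hG hTc (P : Subgroup G) hPp
      (hpH hPp)
    exact ⟨K, h1, h2, Or.inr h3⟩
  obtain ⟨S, hS⟩ : ∃ S, S = {a | a ∈ T ∧ ∀ x ∈ (P : Subgroup G), x * a = a * x} := ⟨_, rfl⟩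
  have hST : S ⊆ T := by rw [hS]; exact fun x hx => hx.1
  have hSdvd : p ∣ S.ncard := by
    have h1 := pfix (P : Subgroup G) P.isPGroup' T (fun x _ a ha => hinv a ha x)
    rw [← hS, hTc] at h1
    exact Nat.modEq_zero_iff_dvd.1 (h1.symm.trans (by simp [Nat.ModEq]))
  have hSle : S.ncard ≤ 2 * p := hTc ▸ Set.ncard_le_ncard hST (Set.toFinite _)
  have hSpos : 0 < S.ncard := by
    rw [Set.ncard_pos (Set.toFinite _)]
    exact ⟨1, by rw [hS]; exact ⟨h1T, by simp⟩⟩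
  have hScase : S.ncard = 2 * p ∨ S.ncard = p := by
    obtain ⟨k, hk⟩ := hSdvd
    rw [hk] at hSle hSpos ⊢
    have hpos := hp.out.pos
    have h1 : k ≤ 2 := by
      rw [mul_comm] at hSle
      exact Nat.le_of_mul_le_mul_right hSle hpos
    have h2 : k ≠ 0 := by rintro rfl; simp at hSpos
    have : k = 1 ∨ k = 2 := by omega
    rcases this with rfl | rfl
    · right; ring
    · left; ring
  rcases hScase with hS2 | hSp
  · have hSeq : S = T := Set.eq_of_subset_of_ncard_le hST (by rw [hS2, hTc]) (Set.toFinite _)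
    have hPc : ∀ z ∈ (P : Subgroup G), ∀ g, g * z = z * g := by
      intro z hz
      apply hcenT
      intro t ht
      rw [← hSeq, hS] at ht
      exact ht.2 z hz
    have h1 := central_card hodd H hFaith (P : Subgroup G) hPc n (by rw [← hn]) hG
    exact hBfin ⟨fun z hz g => by rw [hPc z hz g]; simpa using hz⟩ (Nat.dvd_antisymm h1 hpP)
  · have hRc : (T \ S).ncard = p := by
      have := Set.ncard_diff_add_ncard_of_subset hST (Set.toFinite _)
      omega
    have hRinv : ∀ x ∈ (P : Subgroup G), ∀ a ∈ T \ S, x * a * x⁻¹ ∈ T \ S := by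
      intro x hx a ha
      refine ⟨hinv a ha.1 x, fun h => ha.2 ?_⟩
      have h' := h
      rw [hS] at h'
      have h1 := h'.2 x hx
      have e : a = x * a * x⁻¹ := by
        have : x * a = x * (x * a * x⁻¹) := by rw [h1]; group
        exact mul_left_cancel this
      rw [e]; exact h
    have horb := fun r (hr : r ∈ T \ S) => orb_all (P : Subgroup G) P.isPGroup' (T \ S) hRinv hRc r hr
      (fun h => hr.2 (by rw [hS]; exact ⟨hr.1, h⟩))
    have hRne : (T \ S).Nonempty := by
      rw [← Set.ncard_pos (Set.toFinite _), hRc]; exact hp.out.pos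
    obtain ⟨r, hr⟩ := hRne
    obtain ⟨hro, hri⟩ := horb r hr
    have hn0 : n ≠ 0 := by
      rintro rfl
      rw [hn, pow_zero] at hpP
      exact hp.out.one_lt.ne' (Nat.dvd_one.1 hpP)
    have hP0N : ((Subgroup.centralizer {r}).subgroupOf (P : Subgroup G)).Normal := by
      apply Subgroup.normal_of_index_eq_minFac_card
      rw [hn, hp.out.pow_minFac hn0]; exact hri
    set Z := Subgroup.centralizer {r} ⊓ (P : Subgroup G) with hZdef
    have hZcen : ∀ z ∈ Z, ∀ g, g * z = z * g := by
      rintro z ⟨hzr, hzP⟩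
      apply hcenT
      intro t ht
      by_cases htS : t ∈ S
      · rw [hS] at htS
        exact htS.2 z hzP
      · have : t ∈ T \ S := ⟨ht, htS⟩
        rw [hro] at this
        obtain ⟨y, hy, rfl⟩ := this
        have h1 := hP0N.conj_mem ⟨z, hzP⟩ (Subgroup.mem_subgroupOf.2 hzr) ⟨y⁻¹, inv_mem hy⟩
        rw [Subgroup.mem_subgroupOf, Subgroup.mem_centralizer_singleton_iff] at h1
        have h1 : y⁻¹ * z * y⁻¹⁻¹ * r = r * (y⁻¹ * z * y⁻¹⁻¹) := h1
        calc z * (y * r * y⁻¹) = y * (y⁻¹ * z * y⁻¹⁻¹ * r) * y⁻¹ := by group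
          _ = _ := by rw [h1]; group
    have hZP : Nat.card Z * p = Nat.card P := by
      have h1 := ((Subgroup.centralizer {r}).subgroupOf (P : Subgroup G)).card_mul_index
      have h2 : ((Subgroup.centralizer {r}).subgroupOf (P : Subgroup G)).index = p := hri
      rw [h2] at h1
      rw [← h1, ← Subgroup.inf_subgroupOf_right]
      congr 1
      exact (Nat.card_congr (Subgroup.subgroupOfEquivOfLe inf_le_right).toEquiv).symm
    have hZd := central_card hodd H hFaith Z hZcen n ⟨p, by rw [hZP, hn]⟩ hG
    rcases (Nat.dvd_prime hp.out).1 hZd with hZ1 | hZ1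
    · rw [hZ1, one_mul] at hZP
      exact hBfin (caseC hodd H T hT h1T hinv hFaith hG hTc P hZP.symm (hpH hZP.symm) S hS hSp
        (fun r hr => (horb r hr).1)) hZP.symm
    · rw [hZ1] at hZP
      have hpH' : p ∣ Nat.card H := by
        have h1 : Nat.card P ∣ Nat.card G := Subgroup.card_subgroup_dvd_card _
        rw [← hZP, hG] at h1
        have h2 : p ∣ Nat.card H * 2 :=
          Nat.dvd_of_mul_dvd_mul_right hp.out.pos (by rwa [mul_assoc])
        exact (hodd.coprime_two_right).dvd_of_dvd_mul_right h2
      obtain ⟨K, h1, h2, h3⟩ := caseA hodd H hFaith Z hZcen hZ1 hG hpH'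
      exact ⟨K, h1, h2, Or.inl h3⟩

/-- Main theorem: the right multiplication group of an RCC loop of order `2p`, `p` an odd
prime, is `C_p ≀ C_2`, a subgroup of `Aff(1,p)`, or `K × C_2` with `K ≤ Aff(1,p)` of odd
order; the three cases are mutually exclusive, and in cases (b), (c) the subgroup
`⟨T ∩ K⟩` is normal of order `p`. -/
theorem stmt_3 {G : Type*} [Group G] [Finite G] (p : ℕ) (hp : p.Prime) (hodd : Odd p)
    (H : Subgroup G) (T : Set G)
    (hLF : IsLoopFolder H T) (hRCC : IsRCC T) (hFaith : IsFaithfulFolder H)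
    (hord : Nat.card T = 2 * p) (hgen : Subgroup.closure T = ⊤) :
    ∃ K : Subgroup G, H ≤ K ∧ K.index = 2 ∧
      ((Nonempty (G ≃* WreathCpC2 p) ∨
        (∃ f : G →* Aff1 p, Function.Injective f) ∨
        (∃ a : G, orderOf a = 2 ∧ K.Normal ∧ (Subgroup.zpowers a).Normal ∧
          K ⊓ Subgroup.zpowers a = ⊥ ∧ K ⊔ Subgroup.zpowers a = ⊤ ∧
          Odd (Nat.card K) ∧ ∃ f : K →* Aff1 p, Function.Injective f)) ∧
      ¬(Nonempty (G ≃* WreathCpC2 p) ∧ (∃ f : G →* Aff1 p, Function.Injective f)) ∧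
      ¬(Nonempty (G ≃* WreathCpC2 p) ∧
        (∃ a : G, orderOf a = 2 ∧ K.Normal ∧ (Subgroup.zpowers a).Normal ∧
          K ⊓ Subgroup.zpowers a = ⊥ ∧ K ⊔ Subgroup.zpowers a = ⊤ ∧
          Odd (Nat.card K) ∧ ∃ f : K →* Aff1 p, Function.Injective f)) ∧
      ¬((∃ f : G →* Aff1 p, Function.Injective f) ∧
        (∃ a : G, orderOf a = 2 ∧ K.Normal ∧ (Subgroup.zpowers a).Normal ∧
          K ⊓ Subgroup.zpowers a = ⊥ ∧ K ⊔ Subgroup.zpowers a = ⊤ ∧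
          Odd (Nat.card K) ∧ ∃ f : K →* Aff1 p, Function.Injective f)) ∧
      (((∃ f : G →* Aff1 p, Function.Injective f) ∨
        (∃ a : G, orderOf a = 2 ∧ K.Normal ∧ (Subgroup.zpowers a).Normal ∧
          K ⊓ Subgroup.zpowers a = ⊥ ∧ K ⊔ Subgroup.zpowers a = ⊤ ∧
          Odd (Nat.card K) ∧ ∃ f : K →* Aff1 p, Function.Injective f)) →
        (Subgroup.closure (T ∩ (K : Set G))).Normal ∧
          Nat.card (Subgroup.closure (T ∩ (K : Set G))) = p)) := by
  have hF : Fact p.Prime := ⟨hp⟩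
  have hT : ∀ x : G, ∃! t, t ∈ T ∧ x * t⁻¹ ∈ H := by
    intro x
    have := hLF.2 1 x
    simpa using this
  have hinv : ∀ t ∈ T, ∀ g : G, g * t * g⁻¹ ∈ T := by
    intro t ht g
    have := hRCC t ht g⁻¹
    simpa using this
  have hTc : T.ncard = 2 * p := hord
  have hG : Nat.card G = Nat.card H * (2 * p) := by
    have := card_trans H ⊤ T hT le_top
    rw [Subgroup.coe_top, Set.inter_univ, hTc, Subgroup.card_top] at this
    exact this
  obtain ⟨K, hHK, hKi, hcl⟩ := main_class hodd H T hT hLF.1 hinv hFaith hgen hG hTc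
  have hab : ¬(Nonempty (G ≃* WreathCpC2 p) ∧ (∃ f : G →* Aff1 p, Function.Injective f)) := by
    rintro ⟨he, f, hf⟩
    have h1 := excl_ab he
    have h2 := aff_card f hf
    omega
  have hac : ¬(Nonempty (G ≃* WreathCpC2 p) ∧
        (∃ a : G, orderOf a = 2 ∧ K.Normal ∧ (Subgroup.zpowers a).Normal ∧
          K ⊓ Subgroup.zpowers a = ⊥ ∧ K ⊔ Subgroup.zpowers a = ⊤ ∧
          Odd (Nat.card K) ∧ ∃ f : K →* Aff1 p, Function.Injective f)) := by
    rintro ⟨he, a, -, -, -, -, -, -, f, hf⟩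
    have h1 := excl_ab he
    have h2 := aff_card f hf
    have h3 := K.card_mul_index
    rw [hKi] at h3
    omega
  refine ⟨K, hHK, hKi, ?_, hab, hac, ?_, ?_⟩
  · rcases hcl with h | ⟨h, -⟩
    · exact Or.inl h
    · exact Or.inr h
  · rintro ⟨⟨f, hf⟩, a, ha, -, hN, -⟩
    exact excl_bc hp hodd ⟨Nat.card H * 2, by rw [hG]; ring⟩ f hf a ha hN
  · intro h
    rcases hcl with h' | ⟨-, h'⟩
    · rcases h with h | h
      · exact absurd ⟨h', h⟩ hab
      · exact absurd ⟨h', h⟩ hac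
    · exact h'
end
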